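/- arXiv:1403.3642 — 2 statements merged into one kernel-verified Lean document; each statement's English description precedes it below -/
import Mathlib

section
/- Let E₀ = { (−cos φ, 0, sin φ) : φ ∈ [−π/2, π/2] } ⊆ S² be a closed half great circle. Then Λ(E₀) = 3/4, and the infimum defining Λ(E₀) is attained by the restriction to S² ∖ E₀ of the function f(x,y,z) = √ρ · sin(θ/2), where (ρ,θ) with ρ = √(x²+y²) and θ ∈ (−π,π) are the polar coordinates of (x,y) (equivalently f(x,y,z) = Im √(x+iy) for the principal branch of the square root): this f satisfies ∫_{S²} f dH² = 0, 0 < ∫_{S²} f² dH² < ∞ and ∫_{S² ∖ E₀} |∇_τ f|² dH² = (3/4) ∫_{S²} f² dH², while every admissible u satisfies ∫_{S² ∖ E₀} |∇_τ u|² dH² ≥ (3/4) ∫_{S²} u² dH². -/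
open MeasureTheory Metric Set Filter
open scoped ENNReal NNReal Topology

noncomputable section

/-- `ℝ^N` as a Euclidean space. -/
abbrev Rn (N : ℕ) := EuclideanSpace ℝ (Fin N)

/-- `u` is locally Lipschitz on the set `s` (neighborhoods taken within `s`). -/
def LocLipOn (N : ℕ) (u : Rn N → ℝ) (s : Set (Rn N)) : Prop :=
  ∀ x ∈ s, ∃ t ∈ nhdsWithin x s, ∃ C : ℝ≥0, LipschitzOnWith C u t

/-- The unit sphere `S² ⊆ ℝ³`. -/
def S2 : Set (Rn 3) := sphere (0 : Rn 3) 1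

/-- The open cone (with vertex removed) over a subset `U` of the sphere. -/
def coneOver (U : Set (Rn 3)) : Set (Rn 3) :=
  {z | ∃ t : ℝ, 0 < t ∧ ∃ y ∈ U, z = t • y}

/-- Admissible test functions for the Rayleigh quotient on `S² ∖ K`: a locally Lipschitz
function on `S² ∖ K` is encoded by its radially `0`-homogeneous extension `g` (so that
the ambient gradient of `g` at points of the sphere is the tangential gradient `∇_τ`),
with `0 < ∫_{S²} g² dH² < ∞`, finite tangential energy on `S² ∖ K`, and zero mean. -/
def SphAdmissible (K : Set (Rn 3)) (g : Rn 3 → ℝ) : Prop :=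
  (∀ (y : Rn 3) (t : ℝ), 0 < t → g (t • y) = g y) ∧
  LocLipOn 3 g (coneOver (S2 \ K)) ∧
  0 < (∫⁻ y in S2, ENNReal.ofReal ((g y) ^ 2) ∂μH[(2 : ℝ)]) ∧
  (∫⁻ y in S2, ENNReal.ofReal ((g y) ^ 2) ∂μH[(2 : ℝ)]) < ⊤ ∧
  (∫⁻ y in S2 \ K, ENNReal.ofReal (‖gradient g y‖ ^ 2) ∂μH[(2 : ℝ)]) < ⊤ ∧
  (∫ y in S2, g y ∂μH[(2 : ℝ)]) = 0

/-- `Λ(K)`: the infimum of the Rayleigh quotients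
`∫_{S² ∖ K} |∇_τ u|² dH² / ∫_{S²} u² dH²` over admissible `u`; for `S² ∖ K` connected
this is the first nonzero Neumann eigenvalue of the Laplace–Beltrami operator
on `S² ∖ K`. -/
def Lam (K : Set (Rn 3)) : ℝ≥0∞ :=
  sInf { q : ℝ≥0∞ | ∃ g : Rn 3 → ℝ, SphAdmissible K g ∧
    q = (∫⁻ y in S2 \ K, ENNReal.ofReal (‖gradient g y‖ ^ 2) ∂μH[(2 : ℝ)]) /
        (∫⁻ y in S2, ENNReal.ofReal ((g y) ^ 2) ∂μH[(2 : ℝ)]) }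

/-- The closed half great circle `E₀ = {(-cos φ, 0, sin φ) : φ ∈ [-π/2, π/2]} ⊆ S²`. -/
def halfCircle : Set (Rn 3) :=
  {x | ∃ φ : ℝ, φ ∈ Icc (-(Real.pi / 2)) (Real.pi / 2) ∧
    x 0 = -Real.cos φ ∧ x 1 = 0 ∧ x 2 = Real.sin φ}

/-- The cracktip function `f(x, y, z) = √ρ sin(θ/2) = Im √(x + iy)` (principal branch),
where `(ρ, θ)` are the polar coordinates of `(x, y)`. -/
def cracktip (x : Rn 3) : ℝ :=
  (((x 0 : ℂ) + (x 1 : ℂ) * Complex.I) ^ ((1 : ℂ) / 2)).im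

/-- The radially `0`-homogeneous extension of the restriction of the cracktip function
to the unit sphere (this agrees with `cracktip` on `S²`). -/
def cracktip0 (x : Rn 3) : ℝ := cracktip (‖x‖⁻¹ • x)

/-!
In geographic coordinates `(φ, θ)` the area element is `cos φ dφ dθ`, the deleted half circle is the
meridian `θ = ±π`, and the energy density of `v` is `|∂v/∂φ|² + |∂v/∂θ|² / cos² φ`. Split `v` into
its averages over parallels and its oscillation around them. If `v` has mean zero, so have the
averages, and the Neumann problem for `-(cos φ ·')'` on the meridian has gap `2`, with eigenfunction
`sin φ`. A slit parallel has Neumann gap `1/4`, with eigenfunction `sin (θ/2)`, so for a difference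
`D(φ)` of two values on a parallel the `θ`-energy contributes at least `D² / (4 cos² φ)`; completing
the square gives `∫ (D'² + D² / (4 cos² φ)) cos φ ≥ (3/4) ∫ D² cos φ`, with equality for
`D = √cos φ`. Hence the gap is `3/4`, attained by `√cos φ · sin (θ/2)`, which is the cracktip
function.

That `μH[2]` on the sphere is a multiple of the area measure follows from rotation invariance: on a
set, a finite measure giving balls of equal radius equal mass is unique up to a constant.
-/

/-! ### Poincaré inequalities on an interval -/

section IntervalPoincare

variable {A B ψ ψ' : ℝ → ℝ} {s : Set ℝ} {α β : ℝ}

theorem enorm_sq_eq_ofReal_sq (x : ℝ) : ‖x‖ₑ ^ 2 = ENNReal.ofReal (x ^ 2) := by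
  rw [Real.enorm_eq_ofReal_abs, ← ENNReal.ofReal_pow (abs_nonneg x), sq_abs]

theorem sq_lintegral_mul_le {Ω : Type*} [MeasurableSpace Ω] {μ : Measure Ω} {f g : Ω → ℝ≥0∞}
    (hf : AEMeasurable f μ) (hg : AEMeasurable g μ) :
    (∫⁻ ω, f ω * g ω ∂μ) ^ 2 ≤ (∫⁻ ω, f ω ^ 2 ∂μ) * ∫⁻ ω, g ω ^ 2 ∂μ := by
  have holder := pow_le_pow_left₀ zero_le
    (ENNReal.lintegral_mul_le_Lp_mul_Lq μ Real.HolderConjugate.two_two hf hg) 2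
  rw [mul_pow] at holder
  simp only [← ENNReal.rpow_natCast, ← ENNReal.rpow_mul] at holder ⊢
  norm_num at holder ⊢
  exact holder

theorem integrableOn_Ioo_and_integral_eq_sub {f f' : ℝ → ℝ} {a b : ℝ} (hab : a ≤ b)
    (hf : AbsolutelyContinuousOnInterval f a b)
    (hderiv : ∀ᵐ t ∂volume.restrict (Ioo a b), HasDerivAt f (f' t) t) :
    IntegrableOn f' (Ioo a b) ∧ ∫ t in Ioo a b, f' t = f b - f a := by
  have hderiv_eq : deriv f =ᵐ[volume.restrict (Ioo a b)] f' :=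
    hderiv.mono fun t ht => ht.deriv
  constructor
  · exact ((intervalIntegrable_iff_integrableOn_Ioo_of_le hab).1
      hf.intervalIntegrable_deriv).congr hderiv_eq
  · rw [← integral_congr_ae hderiv_eq, ← hf.integral_deriv_eq_sub,
      intervalIntegral.integral_of_le hab, integral_Ioc_eq_integral_Ioo]

theorem absolutelyContinuousOnInterval_of_locallyLipschitzOn {f : ℝ → ℝ} {a b : ℝ}
    (hf : LocallyLipschitzOn s f) (hab : uIcc a b ⊆ s) : AbsolutelyContinuousOnInterval f a b :=
  let ⟨_, hK⟩ := (hf.mono hab).exists_lipschitzOnWith_of_compact isCompact_uIcc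
  hK.absolutelyContinuousOnInterval

theorem lintegral_Ioo_ofReal_deriv {a b : ℝ} (hab : a ≤ b)
    (hψ : ∀ t, HasDerivAt ψ (ψ' t) t) (hψ' : Continuous ψ') (hnonneg : ∀ t ∈ Ioo a b, 0 ≤ ψ' t) :
    ∫⁻ t in Ioo a b, ENNReal.ofReal (ψ' t) = ENNReal.ofReal (ψ b - ψ a) := by
  rw [← intervalIntegral.integral_eq_sub_of_hasDerivAt (fun t _ => hψ t)
      (hψ'.intervalIntegrable a b), intervalIntegral.integral_of_le hab,
      integral_Ioc_eq_integral_Ioo, ofReal_integral_eq_lintegral_ofReal]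
  · exact hψ'.integrableOn_Icc.mono_set Ioo_subset_Icc_self
  · exact ae_restrict_of_forall_mem measurableSet_Ioo hnonneg

/-- `B` is an upper gradient of `A` between points of `s`: the increments of `A` are bounded by the
integral of `|B|`. In this form the notion survives averaging over a parameter, where the average
need not be differentiable and may be controlled at almost every point only; hence the set `s`. -/
def IsUpperGradientOn (A B : ℝ → ℝ) (s : Set ℝ) : Prop :=
  ∀ x ∈ s, ∀ y ∈ s, x < y → ‖A y - A x‖ₑ ≤ ∫⁻ t in Ioo x y, ‖B t‖ₑ

theorem integral_Ioo_eq_sub_of_locallyLipschitzOn (hA : LocallyLipschitzOn (Ioo α β) A)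
    (hderiv : ∀ᵐ t ∂volume.restrict (Ioo α β), HasDerivAt A (B t) t) {x y : ℝ}
    (hx : x ∈ Ioo α β) (hy : y ∈ Ioo α β) (hxy : x ≤ y) : ∫ t in Ioo x y, B t = A y - A x := by
  have hIcc : Icc x y ⊆ Ioo α β := Icc_subset_Ioo hx.1 hy.2
  exact (integrableOn_Ioo_and_integral_eq_sub hxy
    (absolutelyContinuousOnInterval_of_locallyLipschitzOn hA (by rwa [uIcc_of_le hxy]))
    (ae_restrict_of_ae_restrict_of_subset (Ioo_subset_Icc_self.trans hIcc) hderiv)).2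

theorem isUpperGradientOn_of_locallyLipschitzOn (hA : LocallyLipschitzOn (Ioo α β) A)
    (hderiv : ∀ᵐ t ∂volume.restrict (Ioo α β), HasDerivAt A (B t) t) :
    IsUpperGradientOn A B (Ioo α β) := fun _ hx _ hy hxy =>
  integral_Ioo_eq_sub_of_locallyLipschitzOn hA hderiv hx hy hxy.le ▸
    enorm_integral_le_lintegral_enorm _

/-- The function `ψ` serves as a change of variable: Cauchy–Schwarz with weight `ψ'`. -/
theorem IsUpperGradientOn.enorm_sub_sq_le (hA : IsUpperGradientOn A B s) (hB : Measurable B)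
    (hψ : ∀ t, HasDerivAt ψ (ψ' t) t) (hψ' : Continuous ψ') {x y : ℝ} (hx : x ∈ s) (hy : y ∈ s)
    (hxy : x < y) (hpos : ∀ t ∈ Ioo x y, 0 < ψ' t) :
    ‖A y - A x‖ₑ ^ 2 ≤
      (∫⁻ t in Ioo x y, ‖B t‖ₑ ^ 2 / ENNReal.ofReal (ψ' t)) * ENNReal.ofReal (ψ y - ψ x) := by
  have hψ'm := hψ'.measurable
  calc ‖A y - A x‖ₑ ^ 2
      ≤ (∫⁻ t in Ioo x y, ‖B t‖ₑ) ^ 2 := pow_le_pow_left₀ zero_le (hA x hx y hy hxy) 2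
    _ = (∫⁻ t in Ioo x y, ‖B t‖ₑ / ENNReal.ofReal √(ψ' t) * ENNReal.ofReal √(ψ' t)) ^ 2 := by
        congr 1
        refine setLIntegral_congr_fun measurableSet_Ioo fun t ht => ?_
        have := Real.sqrt_pos.2 (hpos t ht)
        exact (ENNReal.div_mul_cancel (by simpa) ENNReal.ofReal_ne_top).symm
    _ ≤ (∫⁻ t in Ioo x y, (‖B t‖ₑ / ENNReal.ofReal √(ψ' t)) ^ 2) *
          ∫⁻ t in Ioo x y, ENNReal.ofReal √(ψ' t) ^ 2 := by
        apply sq_lintegral_mul_le <;> fun_prop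
    _ = (∫⁻ t in Ioo x y, ‖B t‖ₑ ^ 2 / ENNReal.ofReal (ψ' t)) *
          ∫⁻ t in Ioo x y, ENNReal.ofReal (ψ' t) := by
        have hsqrt : ∀ t ∈ Ioo x y, ENNReal.ofReal √(ψ' t) ^ 2 = ENNReal.ofReal (ψ' t) :=
          fun t ht => by rw [← ENNReal.ofReal_pow (Real.sqrt_nonneg _), Real.sq_sqrt (hpos t ht).le]
        congr 1
        · refine setLIntegral_congr_fun measurableSet_Ioo fun t ht => ?_
          simp only [ENNReal.div_eq_inv_mul, mul_pow, ← ENNReal.inv_pow, hsqrt t ht]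
        · exact setLIntegral_congr_fun measurableSet_Ioo hsqrt
    _ = _ := by rw [lintegral_Ioo_ofReal_deriv hxy.le hψ hψ' fun t ht => (hpos t ht).le]

theorem lintegral_lintegral_lintegral_swap {X Y T : Type*} [MeasurableSpace X] [MeasurableSpace Y]
    [MeasurableSpace T] {μ : Measure X} {ν : Measure Y} {τ : Measure T} [SFinite μ] [SFinite ν]
    [SFinite τ] {k : X → Y → T → ℝ≥0∞} (hk : Measurable fun p : X × Y × T => k p.1 p.2.1 p.2.2) :
    ∫⁻ x, ∫⁻ y, ∫⁻ t, k x y t ∂τ ∂ν ∂μ = ∫⁻ t, ∫⁻ x, ∫⁻ y, k x y t ∂ν ∂μ ∂τ := by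
  calc ∫⁻ x, ∫⁻ y, ∫⁻ t, k x y t ∂τ ∂ν ∂μ = ∫⁻ x, ∫⁻ t, ∫⁻ y, k x y t ∂ν ∂τ ∂μ := by
        refine lintegral_congr fun x => lintegral_lintegral_swap ?_
        exact (hk.comp (by fun_prop : Measurable fun p : Y × T => (x, p.1, p.2))).aemeasurable
    _ = _ := by
        refine lintegral_lintegral_swap (Measurable.aemeasurable ?_)
        exact Measurable.lintegral_prod_right'
          (hk.comp (by fun_prop : Measurable fun p : (X × T) × Y => (p.1.1, p.2, p.1.2)))

variable {μ : Measure ℝ}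

theorem measurable_lintegral_Ioo {τ : Measure ℝ} [SFinite τ] {b : ℝ → ℝ≥0∞} (hb : Measurable b) :
    Measurable fun p : ℝ × ℝ => ∫⁻ t in Ioo p.1 p.2, b t ∂τ := by
  have hIoo : MeasurableSet {p : (ℝ × ℝ) × ℝ | p.2 ∈ Ioo p.1.1 p.1.2} :=
    (measurableSet_lt (f := fun p : (ℝ × ℝ) × ℝ => p.1.1) (by fun_prop) measurable_snd).inter
      (measurableSet_lt (g := fun p : (ℝ × ℝ) × ℝ => p.1.2) measurable_snd (by fun_prop))
  simp_rw [← lintegral_indicator measurableSet_Ioo]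
  exact ((hb.comp measurable_snd).indicator hIoo).lintegral_prod_right'

theorem lintegral_lintegral_mul_lintegral_Ioo {τ : Measure ℝ} [SFinite μ] [SFinite τ]
    {b : ℝ → ℝ≥0∞} {F : ℝ → ℝ → ℝ≥0∞} (hb : Measurable b)
    (hF : Measurable fun p : ℝ × ℝ => F p.1 p.2) :
    ∫⁻ x, ∫⁻ y, (∫⁻ t in Ioo x y, b t ∂τ) * F x y ∂μ ∂μ =
      ∫⁻ t, b t * ∫⁻ x in Iio t, ∫⁻ y in Ioi t, F x y ∂μ ∂μ ∂τ := by
  let k : ℝ → ℝ → ℝ → ℝ≥0∞ := fun x y t =>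
    b t * (Iio t).indicator (fun x => (Ioi t).indicator (fun y => F x y) y) x
  have hk : Measurable fun p : ℝ × ℝ × ℝ => k p.1 p.2.1 p.2.2 := by
    have hlt : MeasurableSet {p : ℝ × ℝ × ℝ | p.1 < p.2.2} :=
      measurableSet_lt (by fun_prop) (by fun_prop)
    have hgt : MeasurableSet {p : ℝ × ℝ × ℝ | p.2.2 < p.2.1} :=
      measurableSet_lt (by fun_prop) (by fun_prop)
    have hF' : Measurable fun p : ℝ × ℝ × ℝ => F p.1 p.2.1 :=
      hF.comp (by fun_prop : Measurable fun p : ℝ × ℝ × ℝ => (p.1, p.2.1))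
    exact (hb.comp (by fun_prop)).mul ((hF'.indicator hgt).indicator hlt)
  calc ∫⁻ x, ∫⁻ y, (∫⁻ t in Ioo x y, b t ∂τ) * F x y ∂μ ∂μ
      = ∫⁻ x, ∫⁻ y, ∫⁻ t, k x y t ∂τ ∂μ ∂μ := by
        refine lintegral_congr fun x => lintegral_congr fun y => ?_
        rw [← lintegral_mul_const _ hb, ← lintegral_indicator measurableSet_Ioo]
        refine lintegral_congr fun t => ?_
        by_cases hx : x < t <;> by_cases hy : t < y <;> simp [k, hx, hy]
    _ = ∫⁻ t, ∫⁻ x, ∫⁻ y, k x y t ∂μ ∂μ ∂τ := lintegral_lintegral_lintegral_swap hk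
    _ = _ := by
        refine lintegral_congr fun t => ?_
        have hinner : ∀ x, ∫⁻ y, k x y t ∂μ =
            (Iio t).indicator (fun x => b t * ∫⁻ y in Ioi t, F x y ∂μ) x := fun x => by
          have hFx : Measurable fun y => F x y := hF.comp measurable_prodMk_left
          by_cases hx : x < t
          · simp [k, hx, lintegral_const_mul _ (hFx.indicator measurableSet_Ioi),
              lintegral_indicator measurableSet_Ioi]
          · simp [k, hx]
        simp_rw [hinner]
        rw [lintegral_indicator measurableSet_Iio, lintegral_const_mul]
        exact hF.lintegral_prod_right'

theorem lintegral_lintegral_le_two_mul_of_lt [SFinite μ] {F G : ℝ → ℝ → ℝ≥0∞}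
    (hG : Measurable fun p : ℝ × ℝ => G p.1 p.2) (hμ : ∀ᵐ x ∂μ, x ∈ s)
    (hsymm : ∀ x y, F x y = F y x) (hdiag : ∀ x, F x x = 0)
    (hFG : ∀ x ∈ s, ∀ y ∈ s, x < y → F x y ≤ G x y) :
    ∫⁻ x, ∫⁻ y, F x y ∂μ ∂μ ≤ 2 * ∫⁻ x, ∫⁻ y, G x y ∂μ ∂μ := by
  have hG_right : ∀ x, Measurable fun y => G x y := fun x => hG.comp measurable_prodMk_left
  calc ∫⁻ x, ∫⁻ y, F x y ∂μ ∂μ ≤ ∫⁻ x, ∫⁻ y, (G x y + G y x) ∂μ ∂μ := by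
        refine lintegral_mono_ae (hμ.mono fun x hx => lintegral_mono_ae (hμ.mono fun y hy => ?_))
        rcases lt_trichotomy x y with hxy | rfl | hxy
        · exact (hFG x hx y hy hxy).trans le_self_add
        · simp [hdiag]
        · exact (hsymm x y).trans_le ((hFG y hy x hx hxy).trans le_add_self)
    _ = 2 * ∫⁻ x, ∫⁻ y, G x y ∂μ ∂μ := by
        simp_rw [lintegral_add_left (hG_right _)]
        rw [lintegral_add_left hG.lintegral_prod_right', two_mul,
          lintegral_lintegral_swap (f := fun x y => G y x) (hG.comp measurable_swap).aemeasurable]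

theorem IsUpperGradientOn.lintegral_enorm_sub_sq_le [SFinite μ] (hA : IsUpperGradientOn A B s)
    (hB : Measurable B) (hψ : ∀ t, HasDerivAt ψ (ψ' t) t) (hψ' : Continuous ψ')
    (hs : s ⊆ Ioo α β) (hμ : ∀ᵐ x ∂μ, x ∈ s) (hpos : ∀ t ∈ Ioo α β, 0 < ψ' t) :
    ∫⁻ x, ∫⁻ y, ‖A y - A x‖ₑ ^ 2 ∂μ ∂μ ≤
      2 * ∫⁻ t in Ioo α β, ‖B t‖ₑ ^ 2 / ENNReal.ofReal (ψ' t) *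
        ∫⁻ x in Iio t, ∫⁻ y in Ioi t, ENNReal.ofReal (ψ y - ψ x) ∂μ ∂μ := by
  have hψm : Measurable ψ := (continuous_iff_continuousAt.2 fun t => (hψ t).continuousAt).measurable
  have hψ'm := hψ'.measurable
  have hb : Measurable fun t => ‖B t‖ₑ ^ 2 / ENNReal.ofReal (ψ' t) := by fun_prop
  rw [← lintegral_lintegral_mul_lintegral_Ioo hb (by fun_prop)]
  refine lintegral_lintegral_le_two_mul_of_lt ((measurable_lintegral_Ioo hb).mul (by fun_prop)) hμ
    (fun x y => by rw [← enorm_neg, neg_sub]) (by simp) fun x hx y hy hxy => ?_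
  have hsub : Ioo x y ⊆ Ioo α β := Ioo_subset_Ioo (hs hx).1.le (hs hy).2.le
  rw [Measure.restrict_restrict measurableSet_Ioo, inter_eq_left.2 hsub]
  exact hA.enorm_sub_sq_le hB hψ hψ' hx hy hxy fun t ht => hpos t (hsub ht)

theorem lintegral_Iio_lintegral_Ioi_ofReal_sub [IsFiniteMeasure μ] [NullSingletonClass μ]
    (hint : Integrable ψ μ) (hmean : ∫ x, ψ x ∂μ = 0) (hmono : MonotoneOn ψ s)
    (hμ : ∀ᵐ x ∂μ, x ∈ s) (t : ℝ) :
    ∫⁻ x in Iio t, ∫⁻ y in Ioi t, ENNReal.ofReal (ψ y - ψ x) ∂μ ∂μ =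
      μ univ * ENNReal.ofReal (∫ y in Ioi t, ψ y ∂μ) := by
  let π := (μ.restrict (Iio t)).prod (μ.restrict (Ioi t))
  have hψ_fst : Integrable (fun p : ℝ × ℝ => ψ p.1) π := hint.restrict.comp_fst _
  have hψ_snd : Integrable (fun p : ℝ × ℝ => ψ p.2) π := hint.restrict.comp_snd _
  have hψ_sub : Integrable (fun p : ℝ × ℝ => ψ p.2 - ψ p.1) π := hψ_snd.sub hψ_fst
  have hnonneg : 0 ≤ᵐ[π] fun p => ψ p.2 - ψ p.1 := by
    have hfst : ∀ᵐ p ∂π, p.1 ∈ s ∧ p.1 < t := Measure.quasiMeasurePreserving_fst.ae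
      ((ae_restrict_of_ae hμ).and (ae_restrict_mem measurableSet_Iio))
    have hsnd : ∀ᵐ p ∂π, p.2 ∈ s ∧ t < p.2 := Measure.quasiMeasurePreserving_snd.ae
      ((ae_restrict_of_ae hμ).and (ae_restrict_mem measurableSet_Ioi))
    filter_upwards [hfst, hsnd] with p h₁ h₂
    exact sub_nonneg.2 (hmono h₁.1 h₂.1 (h₁.2.trans h₂.2).le)
  have hsum : ∫ x in Iio t, ψ x ∂μ = -∫ y in Ioi t, ψ y ∂μ := by
    rw [← setIntegral_congr_set (Iio_ae_eq_Iic (μ := μ) (a := t)).symm,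
      eq_neg_iff_add_eq_zero, intervalIntegral.integral_Iic_add_Ioi hint.integrableOn
      hint.integrableOn, hmean]
  have hmass : μ.real (Iio t) + μ.real (Ioi t) = μ.real univ := by
    rw [measureReal_congr (Iio_ae_eq_Iic (μ := μ) (a := t)), ← compl_Iic,
      measureReal_add_measureReal_compl measurableSet_Iic]
  rw [lintegral_lintegral hψ_sub.aestronglyMeasurable.aemeasurable.ennreal_ofReal,
    ← ofReal_integral_eq_lintegral_ofReal hψ_sub hnonneg,
    integral_sub hψ_snd hψ_fst, integral_fun_snd, integral_fun_fst, hsum,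
    measureReal_restrict_apply_univ, measureReal_restrict_apply_univ, smul_neg, sub_neg_eq_add,
    ← add_smul, hmass, smul_eq_mul, ENNReal.ofReal_mul measureReal_nonneg, ofReal_measureReal]

/-- The hypotheses say that `ψ` is an increasing solution of `-(w ψ')' = κ μ ψ` satisfying the
natural boundary conditions, that is, that `κ` is the first nonzero Neumann eigenvalue of
`-(w ·')'` relative to `μ`. -/
theorem IsUpperGradientOn.poincare [IsFiniteMeasure μ] [NullSingletonClass μ] {w : ℝ → ℝ} {κ : ℝ}
    (hA : IsUpperGradientOn A B s) (hB : Measurable B) (hs : s ⊆ Ioo α β) (hμ : ∀ᵐ x ∂μ, x ∈ s)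
    (hψ : ∀ t, HasDerivAt ψ (ψ' t) t) (hψ' : Continuous ψ') (hpos : ∀ t ∈ Ioo α β, 0 < ψ' t)
    (hint : Integrable ψ μ) (hmean : ∫ x, ψ x ∂μ = 0) (hκ : 0 ≤ κ)
    (heigen : ∀ t ∈ Ioo α β, κ * ∫ y in Ioi t, ψ y ∂μ = w t * ψ' t) :
    ENNReal.ofReal κ * ∫⁻ x, ∫⁻ y, ‖A y - A x‖ₑ ^ 2 ∂μ ∂μ ≤
      2 * μ univ * ∫⁻ t in Ioo α β, ‖B t‖ₑ ^ 2 * ENNReal.ofReal (w t) := by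
  have hmono : MonotoneOn ψ (Ioo α β) :=
    monotoneOn_of_hasDerivWithinAt_nonneg (convex_Ioo α β)
      (fun t _ => (hψ t).continuousAt.continuousWithinAt) (fun t _ => (hψ t).hasDerivWithinAt)
      fun t ht => (hpos t (interior_subset ht)).le
  have hkernel : ∀ t ∈ Ioo α β, ENNReal.ofReal κ * (‖B t‖ₑ ^ 2 / ENNReal.ofReal (ψ' t) *
      ∫⁻ x in Iio t, ∫⁻ y in Ioi t, ENNReal.ofReal (ψ y - ψ x) ∂μ ∂μ) =
      μ univ * (‖B t‖ₑ ^ 2 * ENNReal.ofReal (w t)) := fun t ht => by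
    have hψ't := hpos t ht
    rw [lintegral_Iio_lintegral_Ioi_ofReal_sub hint hmean hmono (hμ.mono fun x hx => hs hx)]
    calc _ = μ univ * (‖B t‖ₑ ^ 2 / ENNReal.ofReal (ψ' t) *
          ENNReal.ofReal (κ * ∫ y in Ioi t, ψ y ∂μ)) := by
          rw [ENNReal.ofReal_mul hκ]; ring
      _ = μ univ * (‖B t‖ₑ ^ 2 / ENNReal.ofReal (ψ' t) * ENNReal.ofReal (ψ' t) *
          ENNReal.ofReal (w t)) := by
          rw [heigen t ht, ENNReal.ofReal_mul' hψ't.le]; ring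
      _ = _ := by rw [ENNReal.div_mul_cancel (by simpa) ENNReal.ofReal_ne_top]
  calc _ ≤ ENNReal.ofReal κ * (2 * ∫⁻ t in Ioo α β, ‖B t‖ₑ ^ 2 / ENNReal.ofReal (ψ' t) *
        ∫⁻ x in Iio t, ∫⁻ y in Ioi t, ENNReal.ofReal (ψ y - ψ x) ∂μ ∂μ) := by
        gcongr
        exact hA.lintegral_enorm_sub_sq_le hB hψ hψ' hs hμ hpos
    _ = 2 * ∫⁻ t in Ioo α β, μ univ * (‖B t‖ₑ ^ 2 * ENNReal.ofReal (w t)) := by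
        rw [mul_left_comm, ← lintegral_const_mul' _ _ ENNReal.ofReal_ne_top,
          setLIntegral_congr_fun measurableSet_Ioo hkernel]
    _ = _ := by rw [lintegral_const_mul' _ _ (measure_ne_top μ univ), mul_assoc]

end IntervalPoincare

/-! ### Latitude and longitude -/

section LatitudeLongitude

open Real

/-- The range of the latitude `φ` in geographic coordinates. -/
abbrev latitudeRange : Set ℝ := Ioo (-(π / 2)) (π / 2)

/-- The range of the longitude `θ` in geographic coordinates; the deleted meridian `θ = π` is the
half circle `E₀`. -/
abbrev longitudeRange : Set ℝ := Ioo (-π) π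

/-- The latitude factor `cos φ dφ` of the area measure of the sphere. -/
def latitudeMeasure : Measure ℝ :=
  (volume.restrict latitudeRange).withDensity fun φ => ENNReal.ofReal (cos φ)

/-- The longitude factor `dθ` of the area measure of the sphere. -/
def longitudeMeasure : Measure ℝ := volume.restrict longitudeRange

theorem cos_pos_of_mem_latitudeRange {φ : ℝ} (hφ : φ ∈ latitudeRange) : 0 < cos φ :=
  cos_pos_of_mem_Ioo hφ

theorem lintegral_latitudeMeasure (f : ℝ → ℝ≥0∞) :
    ∫⁻ φ, f φ ∂latitudeMeasure = ∫⁻ φ in latitudeRange, f φ * ENNReal.ofReal (cos φ) := by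
  rw [latitudeMeasure, lintegral_withDensity_eq_lintegral_mul_non_measurable _ (by fun_prop)
    (by simp)]
  simp only [Pi.mul_apply, mul_comm]

theorem setIntegral_latitudeMeasure (f : ℝ → ℝ) {s : Set ℝ} (hs : MeasurableSet s) :
    ∫ φ in s, f φ ∂latitudeMeasure = ∫ φ in s ∩ latitudeRange, cos φ * f φ := by
  rw [latitudeMeasure, setIntegral_withDensity_eq_setIntegral_toReal_smul (by fun_prop) (by simp) _
    hs, Measure.restrict_restrict hs]
  refine setIntegral_congr_fun (hs.inter measurableSet_Ioo) fun φ hφ => ?_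
  simp only [ENNReal.toReal_ofReal (cos_pos_of_mem_latitudeRange hφ.2).le, smul_eq_mul]

theorem ae_latitudeMeasure : ae latitudeMeasure = ae (volume.restrict latitudeRange) := by
  refine le_antisymm (withDensity_absolutelyContinuous _ _).ae_le
    (withDensity_absolutelyContinuous' (by fun_prop) ?_).ae_le
  refine ae_restrict_of_forall_mem measurableSet_Ioo fun φ hφ => ?_
  simpa using cos_pos_of_mem_latitudeRange hφ

theorem ae_mem_latitudeRange : ∀ᵐ φ ∂latitudeMeasure, φ ∈ latitudeRange := by
  rw [ae_latitudeMeasure]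
  exact ae_restrict_mem measurableSet_Ioo

theorem ae_mem_longitudeRange : ∀ᵐ θ ∂longitudeMeasure, θ ∈ longitudeRange :=
  ae_restrict_mem measurableSet_Ioo

theorem latitudeMeasure_univ : latitudeMeasure univ = 2 := by
  rw [← lintegral_one, lintegral_latitudeMeasure]
  simp only [one_mul]
  rw [lintegral_Ioo_ofReal_deriv (by linarith [pi_pos]) hasDerivAt_sin continuous_cos
    fun φ hφ => (cos_pos_of_mem_latitudeRange hφ).le]
  simp [one_add_one_eq_two]

theorem longitudeMeasure_univ : longitudeMeasure univ = ENNReal.ofReal (2 * π) := by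
  simp [longitudeMeasure, two_mul]

instance : IsFiniteMeasure latitudeMeasure := ⟨by simp [latitudeMeasure_univ]⟩

instance : IsFiniteMeasure longitudeMeasure :=
  ⟨longitudeMeasure_univ.trans_lt ENNReal.ofReal_lt_top⟩

instance : NullSingletonClass latitudeMeasure := nullSingletonClass_withDensity _

instance : NullSingletonClass longitudeMeasure :=
  inferInstanceAs (NullSingletonClass (volume.restrict longitudeRange))

variable {A B : ℝ → ℝ} {s : Set ℝ}

theorem integral_Ioi_sin_latitudeMeasure {t : ℝ} (ht : t ∈ Icc (-(π / 2)) (π / 2)) :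
    ∫ φ in Ioi t, sin φ ∂latitudeMeasure = cos t ^ 2 / 2 := by
  have hset : Ioi t ∩ latitudeRange = Ioo t (π / 2) := by
    rw [inter_comm, Ioo_inter_Ioi, max_eq_right ht.1]
  rw [setIntegral_latitudeMeasure _ measurableSet_Ioi, hset, ← integral_Ioc_eq_integral_Ioo,
    ← intervalIntegral.integral_of_le ht.2]
  simp only [mul_comm (cos _)]
  rw [integral_sin_mul_cos₁, sin_pi_div_two, cos_sq']
  ring

theorem integral_Ioi_sin_half_longitudeMeasure {t : ℝ} (ht : t ∈ Icc (-π) π) :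
    ∫ θ in Ioi t, sin (θ / 2) ∂longitudeMeasure = 2 * cos (t / 2) := by
  have hset : Ioi t ∩ longitudeRange = Ioo t π := by
    rw [inter_comm, Ioo_inter_Ioi, max_eq_right ht.1]
  rw [longitudeMeasure, Measure.restrict_restrict measurableSet_Ioi, hset,
    ← integral_Ioc_eq_integral_Ioo, ← intervalIntegral.integral_of_le ht.2]
  simp

theorem integral_sin_half_longitudeMeasure : ∫ θ, sin (θ / 2) ∂longitudeMeasure = 0 := by
  rw [longitudeMeasure, longitudeRange, ← integral_Ioc_eq_integral_Ioo,
    ← intervalIntegral.integral_of_le (by linarith [pi_pos]),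
    intervalIntegral.integral_comp_div (fun x => sin x) two_ne_zero, integral_sin]
  simp [neg_div]

theorem IsUpperGradientOn.poincare_latitude (hA : IsUpperGradientOn A B s) (hB : Measurable B)
    (hs : s ⊆ latitudeRange) (hae : ∀ᵐ φ ∂latitudeMeasure, φ ∈ s) :
    ∫⁻ x, ∫⁻ y, ‖A y - A x‖ₑ ^ 2 ∂latitudeMeasure ∂latitudeMeasure ≤
      2 * ∫⁻ φ, ‖B φ‖ₑ ^ 2 ∂latitudeMeasure := by
  have hmean : ∫ φ, sin φ ∂latitudeMeasure = 0 := by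
    have hIoi : ∀ᵐ φ ∂latitudeMeasure, φ ∈ Ioi (-(π / 2)) :=
      ae_mem_latitudeRange.mono fun _ h => h.1
    rw [← Measure.restrict_eq_self_of_ae_mem hIoi,
      integral_Ioi_sin_latitudeMeasure ⟨le_rfl, by linarith [pi_pos]⟩]
    simp
  have key := hA.poincare (κ := 2) (w := cos) hB hs hae hasDerivAt_sin continuous_cos
    (fun φ => cos_pos_of_mem_latitudeRange)
    (Integrable.of_bound (by fun_prop) 1 (ae_of_all _ fun φ => abs_sin_le_one φ)) hmean zero_le_two
    fun t ht => by rw [integral_Ioi_sin_latitudeMeasure (Ioo_subset_Icc_self ht)]; ring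
  rw [← lintegral_latitudeMeasure, latitudeMeasure_univ, ENNReal.ofReal_ofNat, mul_assoc] at key
  exact (ENNReal.mul_le_mul_iff_right two_ne_zero ENNReal.ofNat_ne_top).1 key

theorem IsUpperGradientOn.poincare_longitude (hA : IsUpperGradientOn A B longitudeRange)
    (hB : Measurable B) :
    ENNReal.ofReal (1 / 4) * ∫⁻ x, ∫⁻ y, ‖A y - A x‖ₑ ^ 2 ∂longitudeMeasure ∂longitudeMeasure ≤
      2 * longitudeMeasure univ * ∫⁻ θ, ‖B θ‖ₑ ^ 2 ∂longitudeMeasure := by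
  have hderiv : ∀ t, HasDerivAt (fun θ => sin (θ / 2)) (cos (t / 2) / 2) t := fun t => by
    simpa [mul_div_assoc, div_eq_mul_inv] using ((hasDerivAt_id t).div_const 2).sin
  have key := hA.poincare (κ := 1 / 4) (w := fun _ => 1) (μ := longitudeMeasure) hB subset_rfl
    ae_mem_longitudeRange hderiv (by fun_prop)
    (fun t ht => half_pos (cos_pos_of_mem_Ioo ⟨by linarith [ht.1], by linarith [ht.2]⟩))
    (Integrable.of_bound (by fun_prop) 1 (ae_of_all _ fun θ => abs_sin_le_one _))
    integral_sin_half_longitudeMeasure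
    (by norm_num)
    fun t ht => by rw [integral_Ioi_sin_half_longitudeMeasure (Ioo_subset_Icc_self ht)]; ring
  simp only [ENNReal.ofReal_one, mul_one] at key
  exact key

end LatitudeLongitude

section Variance

variable {Ω : Type*} [MeasurableSpace Ω] {μ : Measure Ω} {f : Ω → ℝ}

theorem memLp_two_iff_lintegral_enorm_sq (hf : AEStronglyMeasurable f μ) :
    MemLp f 2 μ ↔ ∫⁻ ω, ‖f ω‖ₑ ^ 2 ∂μ < ∞ := by
  rw [MemLp, and_iff_right hf,
    eLpNorm_lt_top_iff_lintegral_rpow_enorm_lt_top two_ne_zero ENNReal.ofNat_ne_top]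
  simp

theorem lintegral_enorm_sq_eq_ofReal_integral (hf : MemLp f 2 μ) :
    ∫⁻ ω, ‖f ω‖ₑ ^ 2 ∂μ = ENNReal.ofReal (∫ ω, f ω ^ 2 ∂μ) := by
  simp_rw [enorm_sq_eq_ofReal_sq]
  exact (ofReal_integral_eq_lintegral_ofReal hf.integrable_sq
    (ae_of_all _ fun ω => sq_nonneg (f ω))).symm

theorem integral_prod_sub_sq [IsFiniteMeasure μ] (hf : MemLp f 2 μ) :
    ∫ p, (f p.2 - f p.1) ^ 2 ∂μ.prod μ =
      2 * μ.real univ * ∫ ω, f ω ^ 2 ∂μ - 2 * (∫ ω, f ω ∂μ) ^ 2 := by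
  have hint : Integrable f μ := hf.integrable one_le_two
  have hfst : Integrable (fun p : Ω × Ω => f p.1 ^ 2) (μ.prod μ) := hf.integrable_sq.comp_fst μ
  have hsnd : Integrable (fun p : Ω × Ω => f p.2 ^ 2) (μ.prod μ) := hf.integrable_sq.comp_snd μ
  have hprod : Integrable (fun p : Ω × Ω => 2 * (f p.1 * f p.2)) (μ.prod μ) :=
    (hint.mul_prod hint).const_mul 2
  have hexpand : ∀ p : Ω × Ω,
      (f p.2 - f p.1) ^ 2 = f p.1 ^ 2 + f p.2 ^ 2 - 2 * (f p.1 * f p.2) := fun p => by ring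
  simp_rw [hexpand]
  rw [integral_sub (by exact hfst.add hsnd) hprod, integral_add hfst hsnd, integral_const_mul,
    integral_prod_mul, integral_fun_fst (fun ω => f ω ^ 2), integral_fun_snd (fun ω => f ω ^ 2)]
  simp only [smul_eq_mul]
  ring

theorem lintegral_lintegral_enorm_sub_sq [IsFiniteMeasure μ] (hf : MemLp f 2 μ) :
    ∫⁻ x, ∫⁻ y, ‖f y - f x‖ₑ ^ 2 ∂μ ∂μ + 2 * ‖∫ ω, f ω ∂μ‖ₑ ^ 2 =
      2 * μ univ * ∫⁻ ω, ‖f ω‖ₑ ^ 2 ∂μ := by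
  have hsub : MemLp (fun p : Ω × Ω => f p.2 - f p.1) 2 (μ.prod μ) :=
    (hf.comp_snd μ).sub (hf.comp_fst μ)
  rw [lintegral_lintegral (by exact hsub.1.aemeasurable.enorm.pow_const 2),
    lintegral_enorm_sq_eq_ofReal_integral hsub, lintegral_enorm_sq_eq_ofReal_integral hf,
    enorm_sq_eq_ofReal_sq, ← ofReal_measureReal (μ := μ) (s := univ),
    ← ENNReal.ofReal_ofNat 2, ← ENNReal.ofReal_mul zero_le_two, ← ENNReal.ofReal_mul zero_le_two,
    ← ENNReal.ofReal_add (integral_nonneg fun p => sq_nonneg _) (by positivity),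
    ← ENNReal.ofReal_mul (by positivity), integral_prod_sub_sq hf]
  congr 1
  ring

end Variance

section LocallyLipschitz

variable {α β γ : Type*} [PseudoEMetricSpace α] [PseudoEMetricSpace β] [PseudoEMetricSpace γ]

theorem locallyLipschitzOn_comp {f : β → γ} {g : α → β} {s : Set α} {t : Set β}
    (hf : LocallyLipschitzOn t f) (hg : LocallyLipschitzOn s g) (hst : MapsTo g s t) :
    LocallyLipschitzOn s (f ∘ g) := fun x hx => by
  obtain ⟨Kf, V, hV, hfV⟩ := hf (hst hx)
  obtain ⟨Kg, U, hU, hgU⟩ := hg hx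
  refine ⟨Kf * Kg, U ∩ g ⁻¹' V, inter_mem hU ?_, hfV.comp (hgU.mono inter_subset_left)
    fun y hy => hy.2⟩
  exact ((hg.continuousOn x hx).tendsto_nhdsWithin hst) hV

theorem locallyLipschitzOn_congr {f g : α → β} {s : Set α} (hf : LocallyLipschitzOn s f)
    (hgf : EqOn g f s) : LocallyLipschitzOn s g := fun x hx => by
  obtain ⟨K, t, ht, hK⟩ := hf hx
  refine ⟨K, t ∩ s, inter_mem ht self_mem_nhdsWithin, fun y hy z hz => ?_⟩
  rw [hgf hy.2, hgf hz.2]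
  exact hK hy.1 hz.1

end LocallyLipschitz

/-! ### A Hardy inequality in the latitude -/

section Hardy

open Real

variable {D D' : ℝ → ℝ}

theorem frequently_lt_of_integrableOn_div_sub {f : ℝ → ℝ} {a b ε : ℝ} (hab : a < b) (hε : 0 < ε)
    (hint : IntegrableOn (fun t => f t / (b - t)) (Ioo a b)) : ∃ᶠ t in 𝓝[<] b, f t < ε := by
  intro hge
  obtain ⟨c, hc, hge⟩ : ∃ c ∈ Ico a b, Ioo c b ⊆ {t | ε ≤ f t} := by
    simpa only [not_lt] using (mem_nhdsLT_iff_exists_mem_Ico_Ioo_subset hab).1 hge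
  have hinv : IntegrableOn (fun t => (t - b)⁻¹) (Ioo c b) := by
    refine Integrable.mono' ((hint.mono_set (Ioo_subset_Ioo_left hc.1)).const_mul ε⁻¹)
      (by fun_prop) (ae_restrict_of_forall_mem measurableSet_Ioo fun t ht => ?_)
    have hbt : 0 < b - t := sub_pos.2 ht.2
    rw [norm_inv, norm_eq_abs, abs_sub_comm, abs_of_pos hbt]
    calc (b - t)⁻¹ = ε⁻¹ * (ε / (b - t)) := by field_simp
      _ ≤ ε⁻¹ * (f t / (b - t)) := by gcongr; exact hge ht
  rw [← intervalIntegrable_iff_integrableOn_Ioo_of_le hc.2.le,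
    intervalIntegrable_sub_inv_iff] at hinv
  exact hinv.elim hc.2.ne fun h => h right_mem_uIcc

/-- The integrand of Hardy's inequality `hardy_latitude`. -/
def hardyIntegrand (D D' : ℝ → ℝ) (t : ℝ) : ℝ :=
  D' t ^ 2 * cos t + D t ^ 2 / (4 * cos t) - 3 / 4 * (D t ^ 2 * cos t)

/-- Completing the square; equality holds for `D = √cos`. -/
theorem neg_deriv_sin_mul_sq_le_hardyIntegrand {t : ℝ} (ht : 0 < cos t) :
    -(cos t * D t ^ 2 / 2 + sin t * D t * D' t) ≤ hardyIntegrand D D' t := by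
  have hsquare : hardyIntegrand D D' t + (cos t * D t ^ 2 / 2 + sin t * D t * D' t) =
      cos t * (D' t + sin t * D t / (2 * cos t)) ^ 2 := by
    rw [hardyIntegrand]
    field_simp
    linear_combination (D t ^ 2) * (-4) * sin_sq_add_cos_sq t
  have : 0 ≤ cos t * (D' t + sin t * D t / (2 * cos t)) ^ 2 := by positivity
  linarith

theorem neg_sq_le_integral_hardyIntegrand (hD : LocallyLipschitzOn latitudeRange D)
    (hderiv : ∀ᵐ t ∂volume.restrict latitudeRange, HasDerivAt D (D' t) t) {b : ℝ}
    (hb : b ∈ Ico 0 (π / 2)) (hint : IntegrableOn (hardyIntegrand D D') (Ioo 0 b)) :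
    -(D b ^ 2 / 2) ≤ ∫ t in Ioo 0 b, hardyIntegrand D D' t := by
  have hIcc : Icc 0 b ⊆ latitudeRange := Icc_subset_Ioo (by linarith [pi_pos]) hb.2
  have hAC : AbsolutelyContinuousOnInterval (fun t => sin t * (D t * D t) / 2) 0 b := by
    have hDac := absolutelyContinuousOnInterval_of_locallyLipschitzOn hD
      (by rwa [uIcc_of_le hb.1] : uIcc 0 b ⊆ latitudeRange)
    have hsin : AbsolutelyContinuousOnInterval sin 0 b :=
      contDiff_sin.contDiffOn.absolutelyContinuousOnInterval
    simpa [div_eq_inv_mul] using (hsin.mul (hDac.mul hDac)).const_mul 2⁻¹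
  obtain ⟨hint', hval⟩ := integrableOn_Ioo_and_integral_eq_sub hb.1 hAC
    (f' := fun t => cos t * D t ^ 2 / 2 + sin t * D t * D' t) <| by
      refine (ae_restrict_of_ae_restrict_of_subset (Ioo_subset_Icc_self.trans hIcc) hderiv).mono
        fun t ht => ?_
      exact (((hasDerivAt_sin t).mul (ht.mul ht)).div_const 2).congr_deriv
        (by simp only [Pi.mul_apply]; ring)
  calc -(D b ^ 2 / 2) ≤ -(sin b * (D b * D b) / 2 - sin 0 * (D 0 * D 0) / 2) := by
        rw [sin_zero]
        nlinarith [sin_le_one b, sq_nonneg (D b)]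
    _ = ∫ t in Ioo 0 b, -(cos t * D t ^ 2 / 2 + sin t * D t * D' t) := by rw [integral_neg, hval]
    _ ≤ ∫ t in Ioo 0 b, hardyIntegrand D D' t :=
        setIntegral_mono_on hint'.neg hint measurableSet_Ioo fun t ht =>
          neg_deriv_sin_mul_sq_le_hardyIntegrand
            (cos_pos_of_mem_latitudeRange (hIcc (Ioo_subset_Icc_self ht)))

theorem frequently_sq_lt_of_integrableOn_div_cos (hD : LocallyLipschitzOn latitudeRange D)
    (hint : IntegrableOn (fun t => D t ^ 2 / (4 * cos t)) (Ioo 0 (π / 2))) {ε : ℝ} (hε : 0 < ε) :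
    ∃ᶠ t in 𝓝[<] (π / 2), D t ^ 2 < ε := by
  have hIoo : Ioo 0 (π / 2) ⊆ latitudeRange := Ioo_subset_Ioo_left (by linarith [pi_pos])
  refine frequently_lt_of_integrableOn_div_sub pi_div_two_pos hε ?_
  have hmeas : AEStronglyMeasurable D (volume.restrict (Ioo 0 (π / 2))) :=
    (hD.continuousOn.mono hIoo).aestronglyMeasurable measurableSet_Ioo
  refine Integrable.mono' (hint.const_mul 4)
    ((hmeas.pow 2).mul (g := fun t => (π / 2 - t)⁻¹) (by fun_prop))
    (ae_restrict_of_forall_mem measurableSet_Ioo fun t ht => ?_)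
  have hcos : 0 < cos t := cos_pos_of_mem_latitudeRange (hIoo ht)
  have hcos_le : cos t ≤ π / 2 - t := by
    rw [← sin_pi_div_two_sub]
    exact sin_le (sub_nonneg.2 ht.2.le)
  rw [norm_of_nonneg (div_nonneg (sq_nonneg _) (sub_nonneg.2 ht.2.le))]
  calc D t ^ 2 / (π / 2 - t) ≤ D t ^ 2 / cos t := by gcongr
    _ = 4 * (D t ^ 2 / (4 * cos t)) := by field_simp

theorem integral_hardyIntegrand_nonneg (hD : LocallyLipschitzOn latitudeRange D)
    (hderiv : ∀ᵐ t ∂volume.restrict latitudeRange, HasDerivAt D (D' t) t)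
    (hint : IntegrableOn (fun t => D t ^ 2 / (4 * cos t)) (Ioo 0 (π / 2)))
    (hint' : IntegrableOn (hardyIntegrand D D') (Ioo 0 (π / 2))) :
    0 ≤ ∫ t in Ioo 0 (π / 2), hardyIntegrand D D' t := by
  have hIcc : IntegrableOn (hardyIntegrand D D') (uIcc 0 (π / 2)) := by
    rwa [uIcc_of_le pi_div_two_pos.le, integrableOn_Icc_iff_integrableOn_Ioo]
  have hlim : Tendsto (fun b => ∫ t in (0 : ℝ)..b, hardyIntegrand D D' t) (𝓝[<] (π / 2))
      (𝓝 (∫ t in Ioo 0 (π / 2), hardyIntegrand D D' t)) := by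
    rw [← integral_Ioc_eq_integral_Ioo, ← intervalIntegral.integral_of_le pi_div_two_pos.le]
    refine (intervalIntegral.continuousOn_primitive_interval hIcc _ right_mem_uIcc).mono_left
      (nhdsWithin_le_of_mem ?_)
    rw [uIcc_of_le pi_div_two_pos.le]
    exact Icc_mem_nhdsLT pi_div_two_pos
  refine le_of_forall_lt_imp_le_of_dense fun ε hε => ?_
  refine ge_of_tendsto_of_frequently hlim ?_
  have hsmall := frequently_sq_lt_of_integrableOn_div_cos hD hint (by linarith : 0 < -(2 * ε))
  refine (hsmall.and_eventually (Ico_mem_nhdsLT pi_div_two_pos)).mono fun b ⟨hDb, hb⟩ => ?_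
  rw [intervalIntegral.integral_of_le hb.1, integral_Ioc_eq_integral_Ioo]
  have := neg_sq_le_integral_hardyIntegrand hD hderiv hb
    (hint'.mono_set (Ioo_subset_Ioo_right hb.2.le))
  linarith [hDb]

theorem lintegral_ofReal_le_of_integral_le {Ω : Type*} [MeasurableSpace Ω] {μ : Measure Ω}
    {f g : Ω → ℝ} {c : ℝ} (hf : AEStronglyMeasurable f μ) (hf₀ : 0 ≤ᵐ[μ] f)
    (hg : AEStronglyMeasurable g μ) (hg₀ : 0 ≤ᵐ[μ] g) (hgf : ∀ᵐ ω ∂μ, g ω ≤ c * f ω)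
    (hle : Integrable f μ → Integrable g μ → ∫ ω, g ω ∂μ ≤ ∫ ω, f ω ∂μ) :
    ∫⁻ ω, ENNReal.ofReal (g ω) ∂μ ≤ ∫⁻ ω, ENNReal.ofReal (f ω) ∂μ := by
  by_cases htop : ∫⁻ ω, ENNReal.ofReal (f ω) ∂μ = ∞
  · exact htop ▸ le_top
  have hfi : Integrable f μ := (lintegral_ofReal_ne_top_iff_integrable hf hf₀).1 htop
  have hgi : Integrable g μ := (hfi.const_mul c).mono' hg <| by
    filter_upwards [hg₀, hgf] with ω h₀ h using (Real.norm_of_nonneg h₀).trans_le h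
  rw [← ofReal_integral_eq_lintegral_ofReal hfi hf₀, ← ofReal_integral_eq_lintegral_ofReal hgi hg₀]
  exact ENNReal.ofReal_le_ofReal (hle hfi hgi)

theorem three_quarters_mul_sq_mul_cos_le {t : ℝ} (ht : 0 < cos t) :
    3 / 4 * (D t ^ 2 * cos t) ≤ 3 * (D' t ^ 2 * cos t + D t ^ 2 / (4 * cos t)) := by
  have hcos_le : D t ^ 2 * cos t ≤ D t ^ 2 / cos t := by
    rw [le_div_iff₀ ht, mul_assoc]
    exact mul_le_of_le_one_right (sq_nonneg _) (by nlinarith [cos_le_one t])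
  calc 3 / 4 * (D t ^ 2 * cos t) ≤ 3 / 4 * (D t ^ 2 / cos t) := by gcongr
    _ = 3 * (D t ^ 2 / (4 * cos t)) := by field_simp
    _ ≤ _ := by gcongr; exact le_add_of_nonneg_left (by positivity)

theorem hardy_Ioo_zero_pi_div_two (hD : LocallyLipschitzOn latitudeRange D)
    (hderiv : ∀ᵐ t ∂volume.restrict latitudeRange, HasDerivAt D (D' t) t) :
    ∫⁻ t in Ioo 0 (π / 2), ENNReal.ofReal (3 / 4 * (D t ^ 2 * cos t)) ≤
      ∫⁻ t in Ioo 0 (π / 2), ENNReal.ofReal (D' t ^ 2 * cos t + D t ^ 2 / (4 * cos t)) := by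
  have hIoo : Ioo 0 (π / 2) ⊆ latitudeRange := Ioo_subset_Ioo_left (by linarith [pi_pos])
  have hcos : ∀ t ∈ Ioo 0 (π / 2), 0 < cos t := fun t ht => cos_pos_of_mem_latitudeRange (hIoo ht)
  have hDm : AEMeasurable D (volume.restrict (Ioo 0 (π / 2))) :=
    (hD.continuousOn.mono hIoo).aemeasurable measurableSet_Ioo
  have hD'm : AEMeasurable D' (volume.restrict (Ioo 0 (π / 2))) :=
    (measurable_deriv D).aemeasurable.congr <|
      (ae_restrict_of_ae_restrict_of_subset hIoo hderiv).mono fun t ht => ht.deriv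
  refine lintegral_ofReal_le_of_integral_le (c := 3)
    (by fun_prop : AEMeasurable _ _).aestronglyMeasurable
    (ae_restrict_of_forall_mem measurableSet_Ioo fun t ht => ?_)
    (by fun_prop : AEMeasurable _ _).aestronglyMeasurable
    (ae_restrict_of_forall_mem measurableSet_Ioo fun t ht => ?_)
    (ae_restrict_of_forall_mem measurableSet_Ioo fun t ht => ?_) fun hsum hcosint => ?_
  · have := hcos t ht
    simp only [Pi.zero_apply]
    positivity
  · have := hcos t ht
    simp only [Pi.zero_apply]
    positivity
  · exact three_quarters_mul_sq_mul_cos_le (hcos t ht)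
  · have hdiv : IntegrableOn (fun t => D t ^ 2 / (4 * cos t)) (Ioo 0 (π / 2)) :=
      hsum.mono' (by fun_prop : AEMeasurable _ _).aestronglyMeasurable <|
        ae_restrict_of_forall_mem measurableSet_Ioo fun t ht => by
          have := hcos t ht
          rw [norm_of_nonneg (by positivity)]
          exact le_add_of_nonneg_left (by positivity)
    have := integral_hardyIntegrand_nonneg hD hderiv hdiv (hsum.sub hcosint)
    simp only [hardyIntegrand] at this
    rwa [integral_sub hsum hcosint, sub_nonneg] at this

theorem lintegral_latitudeMeasure_eq_add_neg (f : ℝ → ℝ≥0∞) :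
    ∫⁻ φ, f φ ∂latitudeMeasure =
      (∫⁻ t in Ioo 0 (π / 2), f t * ENNReal.ofReal (cos t)) +
        ∫⁻ t in Ioo 0 (π / 2), f (-t) * ENNReal.ofReal (cos t) := by
  have hdisj : Disjoint (Ioc (-(π / 2)) 0) (Ioo 0 (π / 2)) :=
    Set.disjoint_left.2 fun t ht ht' => ht.2.not_gt ht'.1
  have hneg : ∫⁻ t in Ioo 0 (π / 2), f (-t) * ENNReal.ofReal (cos t) =
      ∫⁻ t in Ioo (-(π / 2)) 0, f t * ENNReal.ofReal (cos t) := by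
    have := (Measure.measurePreserving_neg (volume : Measure ℝ)).setLIntegral_comp_preimage_emb
      (MeasurableEquiv.neg ℝ).measurableEmbedding (fun t => f t * ENNReal.ofReal (cos t))
      (Ioo (-(π / 2)) 0)
    simpa using this
  rw [lintegral_latitudeMeasure, latitudeRange,
    ← Ioc_union_Ioo_eq_Ioo (neg_nonpos.2 pi_div_two_pos.le) pi_div_two_pos,
    lintegral_union measurableSet_Ioo hdisj, hneg,
    setLIntegral_congr (Ioo_ae_eq_Ioc (b := (0 : ℝ))), add_comm]

theorem hardy_half_latitude (hD : LocallyLipschitzOn latitudeRange D)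
    (hderiv : ∀ᵐ t ∂volume.restrict latitudeRange, HasDerivAt D (D' t) t) :
    ∫⁻ t in Ioo 0 (π / 2), ENNReal.ofReal (3 / 4) * ‖D t‖ₑ ^ 2 * ENNReal.ofReal (cos t) ≤
      ∫⁻ t in Ioo 0 (π / 2),
        (‖D' t‖ₑ ^ 2 + ‖D t / (2 * cos t)‖ₑ ^ 2) * ENNReal.ofReal (cos t) := by
  refine (hardy_Ioo_zero_pi_div_two hD hderiv).trans_eq' ?_ |>.trans_eq ?_
  all_goals
    refine setLIntegral_congr_fun measurableSet_Ioo fun t ht => ?_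
    have hcos : 0 < cos t := cos_pos_of_mem_latitudeRange ⟨by linarith [ht.1, pi_pos], ht.2⟩
    simp only [enorm_sq_eq_ofReal_sq]
  · rw [← ENNReal.ofReal_mul (by positivity), ← ENNReal.ofReal_mul (by positivity), mul_assoc]
  · rw [← ENNReal.ofReal_add (by positivity) (by positivity), ← ENNReal.ofReal_mul (by positivity)]
    congr 1
    field_simp
    ring

theorem hardy_latitude (hD : LocallyLipschitzOn latitudeRange D)
    (hderiv : ∀ᵐ φ ∂latitudeMeasure, HasDerivAt D (D' φ) φ) :
    ENNReal.ofReal (3 / 4) * ∫⁻ φ, ‖D φ‖ₑ ^ 2 ∂latitudeMeasure ≤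
      ∫⁻ φ, (‖D' φ‖ₑ ^ 2 + ‖D φ / (2 * cos φ)‖ₑ ^ 2) ∂latitudeMeasure := by
  rw [ae_latitudeMeasure] at hderiv
  have hneg_preimage : Neg.neg ⁻¹' latitudeRange = latitudeRange := by simp [latitudeRange]
  have hneg : MeasurePreserving Neg.neg (volume.restrict latitudeRange)
      (volume.restrict latitudeRange) := by
    simpa only [hneg_preimage] using
      (Measure.measurePreserving_neg (volume : Measure ℝ)).restrict_preimage
        (measurableSet_Ioo (a := -(π / 2)) (b := π / 2))
  have hDneg : LocallyLipschitzOn latitudeRange fun t => D (-t) :=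
    locallyLipschitzOn_comp hD LipschitzWith.id.neg.locallyLipschitz.locallyLipschitzOn
      hneg_preimage.ge
  have hderiv_neg : ∀ᵐ t ∂volume.restrict latitudeRange,
      HasDerivAt (fun t => D (-t)) (-D' (-t)) t := by
    filter_upwards [hneg.quasiMeasurePreserving.ae hderiv] with t ht
    simpa [Function.comp_def] using ht.comp t (hasDerivAt_neg t)
  rw [← lintegral_const_mul' _ _ ENNReal.ofReal_ne_top, lintegral_latitudeMeasure_eq_add_neg,
    lintegral_latitudeMeasure_eq_add_neg]
  refine add_le_add (hardy_half_latitude hD hderiv) ?_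
  simpa only [enorm_neg, cos_neg] using hardy_half_latitude hDneg hderiv_neg

end Hardy

/-! ### The spectral gap in geographic coordinates -/

section FiberOscillation

variable {X Y : Type*} [MeasurableSpace X] [MeasurableSpace Y] {μ : Measure X} {ν : Measure Y}
  {u : X → Y → ℝ}

/-- The integral over the base of `∬ |u(x, y') - u(x, y)|²`, that is, of `2 ν(Y)²` times the
variance of `u` in the fibre over `x`. -/
def fiberOscillation (μ : Measure X) (ν : Measure Y) (u : X → Y → ℝ) : ℝ≥0∞ :=
  ∫⁻ x, ∫⁻ y, ∫⁻ y', ‖u x y' - u x y‖ₑ ^ 2 ∂ν ∂ν ∂μ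

theorem measurable_enorm_sub_fiber_sq (hu : Measurable u.uncurry) :
    Measurable fun p : (Y × Y) × X => ‖u p.2 p.1.2 - u p.2 p.1.1‖ₑ ^ 2 :=
  ((hu.comp (by fun_prop : Measurable fun p : (Y × Y) × X => (p.2, p.1.2))).sub
    (hu.comp (by fun_prop : Measurable fun p : (Y × Y) × X => (p.2, p.1.1)))).enorm.pow_const 2

theorem fiberOscillation_eq_lintegral_prod [SFinite μ] [SFinite ν] (hu : Measurable u.uncurry) :
    fiberOscillation μ ν u = ∫⁻ w, ∫⁻ x, ‖u x w.2 - u x w.1‖ₑ ^ 2 ∂μ ∂ν.prod ν := by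
  have hmeas := measurable_enorm_sub_fiber_sq hu
  rw [lintegral_prod _ hmeas.lintegral_prod_right'.aemeasurable]
  exact (lintegral_lintegral_lintegral_swap (k := fun y y' x => ‖u x y' - u x y‖ₑ ^ 2)
    (hmeas.comp MeasurableEquiv.prodAssoc.symm.measurable)).symm

theorem ae_memLp_two_fiber [SFinite ν] (hu : Measurable u.uncurry)
    (hu₂ : MemLp u.uncurry 2 (μ.prod ν)) : ∀ᵐ x ∂μ, MemLp (u x) 2 ν := by
  have hfin := (memLp_two_iff_lintegral_enorm_sq hu₂.1).1 hu₂
  rw [lintegral_prod _ (hu.enorm.pow_const 2).aemeasurable] at hfin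
  filter_upwards [ae_lt_top (hu.enorm.pow_const 2).lintegral_prod_right' hfin.ne] with x hx
  exact (memLp_two_iff_lintegral_enorm_sq hu.of_uncurry_left.aestronglyMeasurable).2 hx

theorem measurable_integral_fiber [SFinite ν] (hu : Measurable u.uncurry) :
    Measurable fun x => ∫ y, u x y ∂ν :=
  hu.stronglyMeasurable.integral_prod_right.measurable

theorem fiberOscillation_add_two_mul [IsFiniteMeasure ν] (hu : Measurable u.uncurry)
    (hu₂ : MemLp u.uncurry 2 (μ.prod ν)) :
    fiberOscillation μ ν u + 2 * ∫⁻ x, ‖∫ y, u x y ∂ν‖ₑ ^ 2 ∂μ =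
      2 * ν univ * ∫⁻ z, ‖u.uncurry z‖ₑ ^ 2 ∂μ.prod ν := by
  have hmean : Measurable fun x => ‖∫ y, u x y ∂ν‖ₑ ^ 2 :=
    (measurable_integral_fiber hu).enorm.pow_const 2
  rw [fiberOscillation, lintegral_prod _ (hu.enorm.pow_const 2).aemeasurable,
    ← lintegral_const_mul _ hmean, ← lintegral_add_right _ (hmean.const_mul 2),
    ← lintegral_const_mul' _ _ (ENNReal.mul_ne_top ENNReal.ofNat_ne_top (measure_ne_top _ _))]
  refine lintegral_congr_ae ?_
  filter_upwards [ae_memLp_two_fiber hu hu₂] with x hx using lintegral_lintegral_enorm_sub_sq hx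

theorem memLp_two_integral_fiber [IsFiniteMeasure ν] (hu : Measurable u.uncurry)
    (hu₂ : MemLp u.uncurry 2 (μ.prod ν)) : MemLp (fun x => ∫ y, u x y ∂ν) 2 μ := by
  refine (memLp_two_iff_lintegral_enorm_sq (measurable_integral_fiber hu).aestronglyMeasurable).2 ?_
  have htop : 2 * ν univ * ∫⁻ z, ‖u.uncurry z‖ₑ ^ 2 ∂μ.prod ν < ∞ :=
    ENNReal.mul_lt_top (ENNReal.mul_lt_top ENNReal.ofNat_lt_top (measure_lt_top _ _))
      ((memLp_two_iff_lintegral_enorm_sq hu₂.1).1 hu₂)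
  rw [← fiberOscillation_add_two_mul hu hu₂] at htop
  exact ENNReal.lt_top_of_mul_ne_top_right (ENNReal.add_lt_top.1 htop).2.ne two_ne_zero

end FiberOscillation

section GeographicGap

open Real

theorem exists_restrict_Ioo_le_smul_latitudeMeasure {x y : ℝ} (hx : x ∈ latitudeRange)
    (hy : y ∈ latitudeRange) (hxy : x ≤ y) :
    ∃ c : ℝ≥0∞, c ≠ ∞ ∧ volume.restrict (Ioo x y) ≤ c • latitudeMeasure := by
  have hIcc : Icc x y ⊆ latitudeRange := Icc_subset_Ioo hx.1 hy.2
  obtain ⟨t, ht, hmin⟩ := isCompact_Icc.exists_isMinOn (nonempty_Icc.2 hxy)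
    continuous_cos.continuousOn
  have hcos : ENNReal.ofReal (cos t) ≠ 0 := by simpa using cos_pos_of_mem_latitudeRange (hIcc ht)
  refine ⟨(ENNReal.ofReal (cos t))⁻¹, ENNReal.inv_ne_top.2 hcos, ?_⟩
  have hle : ∀ s ∈ Ioo x y, 1 ≤ (ENNReal.ofReal (cos t))⁻¹ * ENNReal.ofReal (cos s) := by
    intro s hs
    rw [← ENNReal.div_eq_inv_mul,
      ENNReal.le_div_iff_mul_le (.inl hcos) (.inl ENNReal.ofReal_ne_top), one_mul]
    exact ENNReal.ofReal_le_ofReal (hmin (Ioo_subset_Icc_self hs))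
  rw [latitudeMeasure, ← withDensity_smul _ (by fun_prop)]
  calc volume.restrict (Ioo x y) = (volume.restrict (Ioo x y)).withDensity 1 := withDensity_one.symm
    _ ≤ (volume.restrict (Ioo x y)).withDensity _ :=
      withDensity_mono (ae_restrict_of_forall_mem measurableSet_Ioo hle)
    _ ≤ _ := by
      rw [← restrict_withDensity measurableSet_Ioo, ← restrict_withDensity measurableSet_Ioo]
      exact Measure.restrict_mono_set _ (Ioo_subset_Icc_self.trans hIcc)

/-- `v` is a function of latitude and longitude that is locally Lipschitz along meridians and
parallels, with almost everywhere the partial derivatives `p = ∂v/∂φ` and `q = ∂v/∂θ`. -/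
structure HasPartialDerivs (v p q : ℝ → ℝ → ℝ) : Prop where
  measurable : Measurable v.uncurry
  measurable_latitude : Measurable p.uncurry
  measurable_longitude : Measurable q.uncurry
  locallyLipschitzOn_latitude : ∀ θ ∈ longitudeRange, LocallyLipschitzOn latitudeRange (v · θ)
  locallyLipschitzOn_longitude : ∀ φ ∈ latitudeRange, LocallyLipschitzOn longitudeRange (v φ)
  hasDerivAt_latitude : ∀ᵐ θ ∂longitudeMeasure, ∀ᵐ φ ∂latitudeMeasure,
    HasDerivAt (v · θ) (p φ θ) φ
  hasDerivAt_longitude : ∀ᵐ φ ∂latitudeMeasure, ∀ᵐ θ ∂longitudeMeasure,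
    HasDerivAt (v φ) (q φ θ) θ

namespace HasPartialDerivs

variable {v p q : ℝ → ℝ → ℝ}

theorem hardy (h : HasPartialDerivs v p q) :
    ENNReal.ofReal (3 / 4) * fiberOscillation latitudeMeasure longitudeMeasure v ≤
      fiberOscillation latitudeMeasure longitudeMeasure p +
        fiberOscillation latitudeMeasure longitudeMeasure fun φ θ => v φ θ / (2 * cos φ) := by
  have hv_cos : Measurable (Function.uncurry fun φ θ => v φ θ / (2 * cos φ)) :=
    h.measurable.div (by fun_prop)
  have hp := measurable_enorm_sub_fiber_sq h.measurable_latitude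
  rw [fiberOscillation_eq_lintegral_prod h.measurable,
    fiberOscillation_eq_lintegral_prod h.measurable_latitude,
    fiberOscillation_eq_lintegral_prod hv_cos, ← lintegral_const_mul' _ _ ENNReal.ofReal_ne_top,
    ← lintegral_add_left hp.lintegral_prod_right']
  have hderiv := h.hasDerivAt_latitude.and ae_mem_longitudeRange
  refine lintegral_mono_ae ?_
  filter_upwards [Measure.quasiMeasurePreserving_fst.ae hderiv,
    Measure.quasiMeasurePreserving_snd.ae hderiv] with w ⟨hxderiv, hx⟩ ⟨hyderiv, hy⟩
  rw [← lintegral_add_left (f := fun φ => ‖p φ w.2 - p φ w.1‖ₑ ^ 2)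
    (by exact hp.comp measurable_prodMk_left)]
  simp only [← sub_div]
  refine hardy_latitude ((h.locallyLipschitzOn_latitude _ hy).sub
    (h.locallyLipschitzOn_latitude _ hx)) ?_
  filter_upwards [hxderiv, hyderiv] with φ hφx hφy using hφy.sub hφx

theorem fiberOscillation_div_cos_le (h : HasPartialDerivs v p q) :
    (fiberOscillation latitudeMeasure longitudeMeasure fun φ θ => v φ θ / (2 * cos φ)) ≤
      2 * longitudeMeasure univ * ∫⁻ z, ‖q z.1 z.2 / cos z.1‖ₑ ^ 2
        ∂latitudeMeasure.prod longitudeMeasure := by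
  have hq : Measurable fun z : ℝ × ℝ => ‖q z.1 z.2 / cos z.1‖ₑ ^ 2 :=
    (h.measurable_longitude.div (by fun_prop)).enorm.pow_const 2
  rw [lintegral_prod _ hq.aemeasurable,
    ← lintegral_const_mul' _ _ (ENNReal.mul_ne_top ENNReal.ofNat_ne_top (measure_ne_top _ _))]
  refine lintegral_mono_ae ?_
  filter_upwards [h.hasDerivAt_longitude, ae_mem_latitudeRange] with φ hφderiv hφ
  have hgrad : IsUpperGradientOn (fun θ => v φ θ / cos φ) (fun θ => q φ θ / cos φ) longitudeRange :=
    isUpperGradientOn_of_locallyLipschitzOn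
      (locallyLipschitzOn_comp (f := (· / cos φ))
        ((contDiff_id (𝕜 := ℝ)).div_const _).locallyLipschitz.locallyLipschitzOn
        (h.locallyLipschitzOn_longitude φ hφ) (mapsTo_univ _ _))
      (hφderiv.mono fun θ hθ => hθ.div_const _)
  have hpoincare := hgrad.poincare_longitude (h.measurable_longitude.of_uncurry_left.div_const _)
  refine hpoincare.trans_eq' ?_
  rw [← lintegral_const_mul' _ _ ENNReal.ofReal_ne_top]
  refine lintegral_congr fun x => ?_
  rw [← lintegral_const_mul' _ _ ENNReal.ofReal_ne_top]
  refine lintegral_congr fun y => ?_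
  rw [enorm_sq_eq_ofReal_sq, enorm_sq_eq_ofReal_sq, ← ENNReal.ofReal_mul (by norm_num)]
  congr 1
  ring

theorem isUpperGradientOn_integral_longitude (h : HasPartialDerivs v p q)
    (hp₂ : MemLp p.uncurry 2 (latitudeMeasure.prod longitudeMeasure)) :
    IsUpperGradientOn (fun φ => ∫ θ, v φ θ ∂longitudeMeasure)
      (fun φ => ∫ θ, p φ θ ∂longitudeMeasure)
      {φ ∈ latitudeRange | Integrable (v φ) longitudeMeasure} := by
  rintro x ⟨hx, hvx⟩ y ⟨hy, hvy⟩ hxy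
  obtain ⟨c, hc, hle⟩ := exists_restrict_Ioo_le_smul_latitudeMeasure hx hy hxy.le
  have hp : Integrable p.uncurry ((volume.restrict (Ioo x y)).prod longitudeMeasure) := by
    refine (hp₂.integrable one_le_two).of_measure_le_smul hc ?_
    rw [← Measure.prod_smul_left]
    gcongr
  have hftc : ∫ θ, v y θ ∂longitudeMeasure - ∫ θ, v x θ ∂longitudeMeasure =
      ∫ t in Ioo x y, ∫ θ, p t θ ∂longitudeMeasure := by
    rw [← integral_sub hvy hvx, integral_integral_swap hp]
    refine integral_congr_ae ?_
    filter_upwards [h.hasDerivAt_latitude, ae_mem_longitudeRange] with θ hderiv hθ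
    rw [ae_latitudeMeasure] at hderiv
    exact (integral_Ioo_eq_sub_of_locallyLipschitzOn (h.locallyLipschitzOn_latitude θ hθ) hderiv
      hx hy hxy.le).symm
  exact hftc ▸ enorm_integral_le_lintegral_enorm _

theorem two_mul_lintegral_integral_longitude_le (h : HasPartialDerivs v p q)
    (hv₂ : MemLp v.uncurry 2 (latitudeMeasure.prod longitudeMeasure))
    (hp₂ : MemLp p.uncurry 2 (latitudeMeasure.prod longitudeMeasure))
    (hmean : ∫ z, v.uncurry z ∂latitudeMeasure.prod longitudeMeasure = 0) :
    2 * ∫⁻ φ, ‖∫ θ, v φ θ ∂longitudeMeasure‖ₑ ^ 2 ∂latitudeMeasure ≤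
      ∫⁻ φ, ‖∫ θ, p φ θ ∂longitudeMeasure‖ₑ ^ 2 ∂latitudeMeasure := by
  have hpoincare := (h.isUpperGradientOn_integral_longitude hp₂).poincare_latitude
    (measurable_integral_fiber h.measurable_latitude) (fun φ hφ => hφ.1)
    (ae_mem_latitudeRange.and ((ae_memLp_two_fiber h.measurable hv₂).mono fun φ hφ =>
      hφ.integrable one_le_two))
  have hvar := lintegral_lintegral_enorm_sub_sq (memLp_two_integral_fiber h.measurable hv₂)
  rw [integral_prod _ (hv₂.integrable one_le_two)] at hmean
  simp only [Function.uncurry_apply_pair] at hmean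
  rw [hmean, enorm_zero, zero_pow two_ne_zero, mul_zero, add_zero, latitudeMeasure_univ, mul_assoc]
    at hvar
  rw [hvar] at hpoincare
  exact (ENNReal.mul_le_mul_iff_right two_ne_zero ENNReal.ofNat_ne_top).1 hpoincare

/-- The oscillation along parallels is controlled by Hardy's inequality with gap exactly `3/4`; the
averages over parallels have the larger gap `2` of the interval with weight `cos φ`. -/
theorem three_quarters_mul_lintegral_le (h : HasPartialDerivs v p q)
    (hv₂ : MemLp v.uncurry 2 (latitudeMeasure.prod longitudeMeasure))
    (hmean : ∫ z, v.uncurry z ∂latitudeMeasure.prod longitudeMeasure = 0) :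
    ENNReal.ofReal (3 / 4) * ∫⁻ z, ‖v.uncurry z‖ₑ ^ 2 ∂latitudeMeasure.prod longitudeMeasure ≤
      (∫⁻ z, ‖p.uncurry z‖ₑ ^ 2 ∂latitudeMeasure.prod longitudeMeasure) +
        ∫⁻ z, ‖q z.1 z.2 / cos z.1‖ₑ ^ 2 ∂latitudeMeasure.prod longitudeMeasure := by
  by_cases hp₂ : MemLp p.uncurry 2 (latitudeMeasure.prod longitudeMeasure)
  swap
  · rw [memLp_two_iff_lintegral_enorm_sq h.measurable_latitude.aestronglyMeasurable,
      not_lt_top_iff] at hp₂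
    simp [hp₂]
  have hmeans := h.two_mul_lintegral_integral_longitude_le hv₂ hp₂ hmean
  have hosc := h.hardy.trans (add_le_add_right h.fiberOscillation_div_cos_le _)
  have hvar_v := fiberOscillation_add_two_mul h.measurable hv₂
  have hvar_p := fiberOscillation_add_two_mul h.measurable_latitude hp₂
  have hν₀ : 2 * longitudeMeasure univ ≠ 0 := by simp [longitudeMeasure_univ, pi_pos]
  have hν : 2 * longitudeMeasure univ ≠ ∞ :=
    ENNReal.mul_ne_top ENNReal.ofNat_ne_top (measure_ne_top _ _)
  have h34 : ENNReal.ofReal (3 / 4) ≤ 1 := ENNReal.ofReal_le_one.2 (by norm_num)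
  rw [← ENNReal.mul_le_mul_iff_right hν₀ hν, mul_left_comm, ← hvar_v, mul_add, mul_add, ← hvar_p]
  refine (add_le_add hosc ((mul_le_of_le_one_left' h34).trans hmeans)).trans ?_
  rw [add_right_comm]
  gcongr
  exact le_mul_of_one_le_left' one_le_two

end HasPartialDerivs

end GeographicGap

/-! ### Uniqueness of uniformly distributed measures -/

section UniformlyDistributed

variable {X : Type*} [PseudoMetricSpace X] [MeasurableSpace X] {μ ν : Measure X} {S U : Set X}
  {h k : ℝ → ℝ≥0∞}

/-- `μ` is concentrated on `S` and uniformly distributed there: every ball of radius `r` centred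
in `S` has measure `h r`. -/
structure IsUniformlyDistributedOn (μ : Measure X) (S : Set X) (h : ℝ → ℝ≥0∞) : Prop where
  ae_mem : ∀ᵐ x ∂μ, x ∈ S
  measure_ball : ∀ r, ∀ x ∈ S, μ (ball x r) = h r

theorem measurableSet_setOf_mem_and_dist_lt [SecondCountableTopology X] [BorelSpace X]
    (hU : IsOpen U) (r : ℝ) : MeasurableSet {z : X × X | z.2 ∈ U ∧ dist z.2 z.1 < r} :=
  ((hU.preimage continuous_snd).inter
    (isOpen_lt (continuous_snd.dist continuous_fst) continuous_const)).measurableSet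

theorem measurable_measure_inter_ball [SecondCountableTopology X] [BorelSpace X] [SFinite ν]
    (hU : IsOpen U) (r : ℝ) : Measurable fun x => ν (U ∩ ball x r) :=
  measurable_measure_prodMk_left (measurableSet_setOf_mem_and_dist_lt hU r)

namespace IsUniformlyDistributedOn

theorem nonempty (hν : IsUniformlyDistributedOn ν S k) (hν₀ : ν ≠ 0) : S.Nonempty := by
  have := NeZero.mk hν₀
  exact hν.ae_mem.exists

theorem ball_measure_ne_top [IsFiniteMeasure ν] (hν : IsUniformlyDistributedOn ν S k)
    (hν₀ : ν ≠ 0) (r : ℝ) : k r ≠ ∞ := by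
  obtain ⟨x, hx⟩ := hν.nonempty hν₀
  exact hν.measure_ball r x hx ▸ measure_ne_top ν _

variable [SecondCountableTopology X]

theorem ball_measure_ne_zero (hν : IsUniformlyDistributedOn ν S k) (hν₀ : ν ≠ 0) {r : ℝ}
    (hr : 0 < r) : k r ≠ 0 := by
  intro hk
  have hS : ν S = 0 := measure_null_of_locally_null S fun x hx =>
    ⟨ball x r, mem_nhdsWithin_of_mem_nhds (ball_mem_nhds x hr), by rw [hν.measure_ball r x hx, hk]⟩
  rw [← Measure.measure_univ_ne_zero, ← union_compl_self S] at hν₀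
  exact hν₀ (measure_union_null hS hν.ae_mem)

variable [BorelSpace X]

theorem lintegral_measure_inter_ball [SFinite μ] [SFinite ν] (hμ : IsUniformlyDistributedOn μ S h)
    (hν : IsUniformlyDistributedOn ν S k) (hU : IsOpen U) (r : ℝ) :
    ∫⁻ x, ν (U ∩ ball x r) ∂μ = h r * ν U := by
  have hslice : ∀ᵐ y ∂ν, μ ((fun x => (x, y)) ⁻¹' {z : X × X | z.2 ∈ U ∧ dist z.2 z.1 < r}) =
      U.indicator (fun _ => h r) y := by
    filter_upwards [hν.ae_mem] with y hy
    by_cases hyU : y ∈ U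
    · rw [indicator_of_mem hyU, ← hμ.measure_ball r y hy]
      congr 1
      ext x
      simp [hyU, mem_ball, dist_comm]
    · simp [hyU]
  calc ∫⁻ x, ν (U ∩ ball x r) ∂μ = μ.prod ν {z : X × X | z.2 ∈ U ∧ dist z.2 z.1 < r} :=
      (Measure.prod_apply (measurableSet_setOf_mem_and_dist_lt hU r)).symm
    _ = h r * ν U := by
      rw [Measure.prod_apply_symm (measurableSet_setOf_mem_and_dist_lt hU r),
        lintegral_congr_ae hslice, lintegral_indicator_const hU.measurableSet]

theorem measure_univ_mul_ball_measure [SFinite μ] [SFinite ν]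
    (hμ : IsUniformlyDistributedOn μ S h) (hν : IsUniformlyDistributedOn ν S k) (r : ℝ) :
    μ univ * k r = h r * ν univ := by
  rw [← lintegral_measure_inter_ball hμ hν isOpen_univ, mul_comm, ← lintegral_const]
  refine lintegral_congr_ae ?_
  filter_upwards [hμ.ae_mem] with x hx
  rw [univ_inter, hν.measure_ball r x hx]

theorem measure_setOf_ball_subset_mul_le [IsFiniteMeasure μ] [IsFiniteMeasure ν]
    (hμ : IsUniformlyDistributedOn μ S h) (hν : IsUniformlyDistributedOn ν S k) (hν₀ : ν ≠ 0)
    (hU : IsOpen U) {r : ℝ} (hr : 0 < r) :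
    μ {x | x ∈ S ∧ ball x r ⊆ U} * ν univ ≤ μ univ * ν U := by
  have hmarkov : k r * μ {x | x ∈ S ∧ ball x r ⊆ U} ≤ h r * ν U := by
    rw [← lintegral_measure_inter_ball hμ hν hU]
    refine le_trans ?_ (mul_meas_ge_le_lintegral (measurable_measure_inter_ball hU r) (k r))
    gcongr with x
    rintro ⟨hxS, hxU⟩
    rw [inter_eq_self_of_subset_right hxU, hν.measure_ball r x hxS]
  refine (ENNReal.mul_le_mul_iff_right (hν.ball_measure_ne_zero hν₀ hr)
    (hν.ball_measure_ne_top hν₀ r)).1 ?_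
  calc k r * (μ {x | x ∈ S ∧ ball x r ⊆ U} * ν univ)
      = k r * μ {x | x ∈ S ∧ ball x r ⊆ U} * ν univ := by ring
    _ ≤ h r * ν U * ν univ := by gcongr
    _ = h r * ν univ * ν U := by ring
    _ = k r * (μ univ * ν U) := by rw [← measure_univ_mul_ball_measure hμ hν]; ring

theorem measure_mul_measure_univ_le [IsFiniteMeasure μ] [IsFiniteMeasure ν]
    (hμ : IsUniformlyDistributedOn μ S h) (hν : IsUniformlyDistributedOn ν S k) (hν₀ : ν ≠ 0)
    (hU : IsOpen U) : μ U * ν univ ≤ μ univ * ν U := by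
  have hmono : Monotone fun n : ℕ => {x | x ∈ S ∧ ball x (1 / ((n : ℝ) + 1)) ⊆ U} :=
    fun m n hmn x hx => ⟨hx.1, (ball_subset_ball (Nat.one_div_le_one_div hmn)).trans hx.2⟩
  have hsub : S ∩ U ⊆ ⋃ n : ℕ, {x | x ∈ S ∧ ball x (1 / ((n : ℝ) + 1)) ⊆ U} := by
    rintro x ⟨hxS, hxU⟩
    obtain ⟨ε, hε, hball⟩ := Metric.isOpen_iff.1 hU x hxU
    obtain ⟨n, hn⟩ := exists_nat_one_div_lt hε
    exact mem_iUnion.2 ⟨n, hxS, (ball_subset_ball hn.le).trans hball⟩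
  calc μ U * ν univ
      ≤ μ (⋃ n : ℕ, {x | x ∈ S ∧ ball x (1 / ((n : ℝ) + 1)) ⊆ U}) * ν univ := by
        gcongr ?_ * _
        exact measure_mono_ae (hμ.ae_mem.mono fun x hxS hxU => hsub ⟨hxS, hxU⟩)
    _ ≤ μ univ * ν U := by
        rw [hmono.measure_iUnion, ENNReal.iSup_mul]
        exact iSup_le fun n => measure_setOf_ball_subset_mul_le hμ hν hν₀ hU (by positivity)

theorem exists_eq_smul [IsFiniteMeasure μ] [IsFiniteMeasure ν]
    (hμ : IsUniformlyDistributedOn μ S h) (hν : IsUniformlyDistributedOn ν S k) (hμ₀ : μ ≠ 0)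
    (hν₀ : ν ≠ 0) : ∃ c : ℝ≥0∞, c ≠ 0 ∧ c ≠ ∞ ∧ μ = c • ν := by
  have hμuniv := Measure.measure_univ_ne_zero.2 hμ₀
  have hνuniv := Measure.measure_univ_ne_zero.2 hν₀
  refine ⟨μ univ / ν univ, (ENNReal.div_pos hμuniv (measure_ne_top ν _)).ne',
    ENNReal.div_ne_top (measure_ne_top μ _) hνuniv, ?_⟩
  have hopen : ∀ U : Set X, IsOpen U → μ U = ((μ univ / ν univ) • ν) U := fun U hU => by
    have heq : μ U * ν univ = μ univ * ν U := by
      refine le_antisymm (measure_mul_measure_univ_le hμ hν hν₀ hU) ?_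
      simpa only [mul_comm] using measure_mul_measure_univ_le hν hμ hμ₀ hU
    rw [Measure.smul_apply, smul_eq_mul, ← ENNReal.mul_div_right_comm, ← heq,
      ENNReal.mul_div_cancel_right hνuniv (measure_ne_top ν _)]
  exact ext_of_generate_finite {U | IsOpen U} BorelSpace.measurable_eq isPiSystem_isOpen hopen
    (hopen univ isOpen_univ)

end IsUniformlyDistributedOn

end UniformlyDistributed

/-! ### Geographic coordinates -/

section GeographicCoordinates

open Real

/-- The point of the unit sphere with latitude `z.1` and longitude `z.2`. -/
def geographic (z : ℝ × ℝ) : Rn 3 := !₂[cos z.1 * cos z.2, cos z.1 * sin z.2, sin z.1]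

theorem contDiff_geographic : ContDiff ℝ 1 geographic :=
  contDiff_euclidean.2 fun i => by
    fin_cases i <;>
      simp only [geographic, Fin.zero_eta, Fin.mk_one, Fin.reduceFinMk, Matrix.cons_val] <;>
      fun_prop

@[fun_prop]
theorem measurable_geographic : Measurable geographic := contDiff_geographic.continuous.measurable

theorem norm_geographic (z : ℝ × ℝ) : ‖geographic z‖ = 1 := by
  rw [EuclideanSpace.norm_eq, sqrt_eq_one]
  simp only [geographic, Fin.sum_univ_three, norm_eq_abs, sq_abs, PiLp.toLp_apply,
    Matrix.cons_val]
  linear_combination (cos z.1 ^ 2) * sin_sq_add_cos_sq z.2 + sin_sq_add_cos_sq z.1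

theorem cos_pos_iff_mem_latitudeRange {θ : ℝ} (hθ : θ ∈ longitudeRange) :
    0 < cos θ ↔ θ ∈ latitudeRange := by
  refine ⟨fun hcos => abs_lt.1 (not_le.1 fun hle => ?_), cos_pos_of_mem_latitudeRange⟩
  refine hcos.not_ge (cos_abs θ ▸ cos_nonpos_of_pi_div_two_le_of_le hle ?_)
  linarith [abs_lt.2 hθ, pi_pos]

theorem lintegral_lintegral_eq_polar {f : ℝ × ℝ → ℝ≥0∞} (hf : Measurable f) :
    ∫⁻ x, ∫⁻ y, f (x, y) = ∫⁻ θ in longitudeRange, ∫⁻ r in Ioi (0 : ℝ),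
      ENNReal.ofReal r * f (r * cos θ, r * sin θ) := by
  rw [← lintegral_prod _ hf.aemeasurable, ← Measure.volume_eq_prod,
    ← lintegral_comp_polarCoord_symm, polarCoord_target,
    Measure.volume_eq_prod, ← Measure.prod_restrict]
  simp only [polarCoord_symm_apply, smul_eq_mul]
  rw [lintegral_prod_symm]
  exact (Measurable.mul (by fun_prop) (hf.comp (by fun_prop))).aemeasurable

theorem lintegral_Ioi_lintegral_eq_polar {f : ℝ × ℝ → ℝ≥0∞} (hf : Measurable f) :
    ∫⁻ x in Ioi (0 : ℝ), ∫⁻ y, f (x, y) = ∫⁻ θ in latitudeRange, ∫⁻ r in Ioi (0 : ℝ),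
      ENNReal.ofReal r * f (r * cos θ, r * sin θ) := by
  have hsub : latitudeRange ⊆ longitudeRange :=
    Ioo_subset_Ioo (by linarith [pi_pos]) (by linarith [pi_pos])
  rw [← inter_eq_left.2 hsub, ← setLIntegral_indicator measurableSet_Ioo,
    ← lintegral_indicator measurableSet_Ioi]
  calc ∫⁻ x, (Ioi 0).indicator (fun x => ∫⁻ y, f (x, y)) x
      = ∫⁻ x, ∫⁻ y, (Prod.fst ⁻¹' Ioi 0).indicator f (x, y) :=
        lintegral_congr fun x => by by_cases hx : 0 < x <;> simp [indicator, hx]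
    _ = _ := lintegral_lintegral_eq_polar (hf.indicator (measurable_fst measurableSet_Ioi))
    _ = _ := setLIntegral_congr_fun measurableSet_Ioo fun θ hθ => ?_
  by_cases hcos : 0 < cos θ
  · rw [indicator_of_mem ((cos_pos_iff_mem_latitudeRange hθ).1 hcos)]
    refine setLIntegral_congr_fun measurableSet_Ioi fun r hr => ?_
    have hpos : (r * cos θ, r * sin θ) ∈ Prod.fst ⁻¹' Ioi (0 : ℝ) := mul_pos hr hcos
    rw [indicator_of_mem hpos]
  · rw [indicator_of_notMem (mt (cos_pos_iff_mem_latitudeRange hθ).2 hcos)]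
    refine setLIntegral_eq_zero measurableSet_Ioi fun r hr => ?_
    rw [indicator_of_notMem, mul_zero, Pi.zero_apply]
    simpa using mul_nonpos_of_nonneg_of_nonpos (le_of_lt hr) (not_lt.1 hcos)

theorem lintegral_euclidean_three {G : Rn 3 → ℝ≥0∞} (hG : Measurable G) :
    ∫⁻ x, G x = ∫⁻ z : ℝ, ∫⁻ x : ℝ, ∫⁻ y : ℝ, G !₂[x, y, z] := by
  have hcons : MeasurePreserving (fun w : ℝ × ℝ × ℝ => (!₂[w.2.1, w.2.2, w.1] : Rn 3)) := by
    convert (PiLp.volume_preserving_toLp (Fin 3)).comp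
      (((volume_preserving_piFinSuccAbove (fun _ : Fin 3 => ℝ) 2).symm _).comp
        ((MeasurePreserving.id volume).prod ((volume_preserving_finTwoArrow ℝ).symm _))) using 1
    · ext w i
      fin_cases i <;> rfl
    · rfl
  rw [← hcons.lintegral_comp hG, Measure.volume_eq_prod, lintegral_prod]
  · refine lintegral_congr fun z => ?_
    rw [Measure.volume_eq_prod, lintegral_prod]
    exact (hG.comp (hcons.measurable.comp measurable_prodMk_left)).aemeasurable
  · exact (hG.comp hcons.measurable).aemeasurable

theorem lintegral_eq_spherical {G : Rn 3 → ℝ≥0∞} (hG : Measurable G) :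
    ∫⁻ x, G x = ∫⁻ θ, ∫⁻ φ, (∫⁻ r in Ioi (0 : ℝ), ENNReal.ofReal (r ^ 2) *
      G (r • geographic (φ, θ))) ∂latitudeMeasure ∂longitudeMeasure := by
  rw [lintegral_euclidean_three hG]
  simp_rw [fun z => lintegral_lintegral_eq_polar (f := fun w => G !₂[w.1, w.2, z]) (by fun_prop)]
  rw [lintegral_lintegral_swap (by fun_prop)]
  refine lintegral_congr fun θ => ?_
  rw [lintegral_lintegral_swap (by fun_prop), lintegral_Ioi_lintegral_eq_polar
    (f := fun w => ENNReal.ofReal w.1 * G !₂[w.1 * cos θ, w.1 * sin θ, w.2]) (by fun_prop),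
    lintegral_latitudeMeasure]
  refine setLIntegral_congr_fun measurableSet_Ioo fun φ _ => ?_
  rw [← lintegral_mul_const _ (by fun_prop)]
  refine setLIntegral_congr_fun measurableSet_Ioi fun r hr => ?_
  have hpoint : (!₂[r * cos φ * cos θ, r * cos φ * sin θ, r * sin φ] : Rn 3) =
      r • geographic (φ, θ) := by
    ext i
    fin_cases i <;> simp [geographic, mul_assoc]
  rw [hpoint, ENNReal.ofReal_mul (le_of_lt hr), ENNReal.ofReal_pow (le_of_lt hr)]
  ring

/-- The area measure `cos φ dφ dθ` of the unit sphere of `ℝ³`. -/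
def areaMeasure : Measure (Rn 3) := (latitudeMeasure.prod longitudeMeasure).map geographic

instance : IsFiniteMeasure areaMeasure := by unfold areaMeasure; infer_instance

theorem lintegral_areaMeasure {f : Rn 3 → ℝ≥0∞} (hf : Measurable f) :
    ∫⁻ x, f x ∂areaMeasure =
      ∫⁻ z, f (geographic z) ∂latitudeMeasure.prod longitudeMeasure :=
  lintegral_map hf measurable_geographic

theorem areaMeasure_ne_zero : areaMeasure ≠ 0 := by
  rw [← Measure.measure_univ_ne_zero, areaMeasure,
    Measure.map_apply measurable_geographic .univ, preimage_univ, ← univ_prod_univ,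
    Measure.prod_prod, latitudeMeasure_univ, longitudeMeasure_univ]
  simp [pi_pos]

theorem map_normalize_volume_ball :
    (volume.restrict (ball (0 : Rn 3) 1)).map (fun x => ‖x‖⁻¹ • x) =
      ENNReal.ofReal (1 / 3) • areaMeasure := by
  have hradial : ∫⁻ r in Ioo (0 : ℝ) 1, ENNReal.ofReal (r ^ 2) = ENNReal.ofReal (1 / 3) := by
    rw [lintegral_Ioo_ofReal_deriv (ψ := fun r => r ^ 3 / 3) zero_le_one
      (fun r => by simpa using (hasDerivAt_pow 3 r).div_const 3) (by fun_prop)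
      fun r _ => sq_nonneg r]
    norm_num
  refine Measure.ext_of_lintegral _ fun f hf => ?_
  have hfn : Measurable fun x : Rn 3 => f (‖x‖⁻¹ • x) := by fun_prop
  rw [lintegral_map hf (by fun_prop), lintegral_smul_measure, lintegral_areaMeasure hf,
    smul_eq_mul, ← lintegral_indicator measurableSet_ball,
    lintegral_eq_spherical (hfn.indicator measurableSet_ball),
    lintegral_prod_symm _ (by fun_prop), ← lintegral_const_mul _ (by fun_prop)]
  refine lintegral_congr fun θ => ?_
  rw [← lintegral_const_mul _ (by fun_prop)]
  refine lintegral_congr fun φ => ?_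
  rw [← hradial, ← lintegral_mul_const _ (by fun_prop), ← Iio_inter_Ioi,
    ← setLIntegral_indicator measurableSet_Iio]
  refine setLIntegral_congr_fun measurableSet_Ioi fun r (hr : 0 < r) => ?_
  have hnorm : ‖r • geographic (φ, θ)‖ = r := by
    rw [norm_smul, norm_geographic, mul_one, norm_of_nonneg hr.le]
  by_cases hr1 : r < 1 <;> simp [indicator, hnorm, hr1, inv_smul_smul₀ hr.ne']

theorem areaMeasure_eq_smul_map_normalize : areaMeasure =
    (3 : ℝ≥0∞) • (volume.restrict (ball (0 : Rn 3) 1)).map (fun x => ‖x‖⁻¹ • x) := by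
  have hthree : 3 * ENNReal.ofReal (1 / 3) = 1 := by
    rw [← ENNReal.ofReal_ofNat, ← ENNReal.ofReal_mul zero_le_three]
    norm_num
  rw [map_normalize_volume_ball, smul_smul, hthree, one_smul]

end GeographicCoordinates

/-! ### Hausdorff measure on the sphere -/

section HausdorffSphere

open Real

theorem isUniformlyDistributedOn_sphere {E : Type*} [NormedAddCommGroup E] [InnerProductSpace ℝ E]
    [MeasurableSpace E] [BorelSpace E] {μ : Measure E} {x₀ : E} {R : ℝ}
    (hinv : ∀ L : E ≃ₗᵢ[ℝ] E, μ.map L = μ) (hae : ∀ᵐ x ∂μ, x ∈ sphere 0 R)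
    (hx₀ : x₀ ∈ sphere 0 R) :
    IsUniformlyDistributedOn μ (sphere 0 R) fun r => μ (ball x₀ r) := by
  refine ⟨hae, fun r x hx => ?_⟩
  have hnorm : ‖x‖ = ‖x₀‖ := by rw [mem_sphere_zero_iff_norm.1 hx, mem_sphere_zero_iff_norm.1 hx₀]
  let L := (Submodule.span ℝ {x - x₀})ᗮ.reflection
  have hL : L x = x₀ := Submodule.reflection_sub hnorm
  rw [← hL]
  conv_rhs => rw [← hinv L]
  rw [Measure.map_apply L.continuous.measurable measurableSet_ball,
    L.isometry.preimage_ball]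

theorem measurableSet_S2 : MeasurableSet S2 := isClosed_sphere.measurableSet

theorem geographic_mem_S2 (z : ℝ × ℝ) : geographic z ∈ S2 :=
  mem_sphere_zero_iff_norm.2 (norm_geographic z)

theorem ae_areaMeasure_mem_S2 : ∀ᵐ x ∂areaMeasure, x ∈ S2 :=
  (ae_map_iff measurable_geographic.aemeasurable measurableSet_S2).2 (ae_of_all _ geographic_mem_S2)

theorem map_areaMeasure (L : Rn 3 ≃ₗᵢ[ℝ] Rn 3) : areaMeasure.map L = areaMeasure := by
  let normalize : Rn 3 → Rn 3 := fun x => ‖x‖⁻¹ • x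
  have hnormalize : Measurable normalize := by fun_prop
  have hball : (volume.restrict (ball (0 : Rn 3) 1)).map L = volume.restrict (ball 0 1) := by
    have h := (L.measurePreserving.restrict_preimage (s := ball 0 1) measurableSet_ball).map_eq
    rwa [show L ⁻¹' ball 0 1 = ball 0 1 by ext x; simp] at h
  have hcomm : L ∘ normalize = normalize ∘ L := by ext1 x; simp [normalize]
  rw [areaMeasure_eq_smul_map_normalize, Measure.map_smul,
    Measure.map_map L.continuous.measurable hnormalize, hcomm,
    ← Measure.map_map hnormalize L.continuous.measurable, hball]

theorem map_hausdorffMeasure_restrict_S2 (L : Rn 3 ≃ₗᵢ[ℝ] Rn 3) :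
    (μH[2].restrict S2).map L = μH[2].restrict S2 := by
  have hL : MeasurePreserving L (μH[2] : Measure (Rn 3)) μH[2] :=
    ⟨L.continuous.measurable, L.toIsometryEquiv.map_hausdorffMeasure 2⟩
  have hpre : L ⁻¹' S2 = S2 := by ext x; simp [S2]
  simpa only [hpre] using (hL.restrict_preimage measurableSet_S2).map_eq

theorem mem_S2_iff {x : Rn 3} : x ∈ S2 ↔ x 0 ^ 2 + x 1 ^ 2 + x 2 ^ 2 = 1 := by
  rw [S2, mem_sphere_zero_iff_norm, EuclideanSpace.norm_eq, sqrt_eq_one]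
  simp [Fin.sum_univ_three]

theorem S2_subset_image_geographic :
    S2 ⊆ geographic '' (Icc (-(π / 2)) (π / 2) ×ˢ Icc (-π) π) := by
  intro x hx
  rw [mem_S2_iff] at hx
  have hlow : -1 ≤ x 2 := by nlinarith [sq_nonneg (x 0), sq_nonneg (x 1)]
  have hup : x 2 ≤ 1 := by nlinarith [sq_nonneg (x 0), sq_nonneg (x 1)]
  refine ⟨(arcsin (x 2), Complex.arg ⟨x 0, x 1⟩), ⟨arcsin_mem_Icc _,
    (Complex.neg_pi_lt_arg _).le, Complex.arg_le_pi _⟩, ?_⟩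
  have hcos : cos (arcsin (x 2)) = ‖(⟨x 0, x 1⟩ : ℂ)‖ := by
    rw [cos_arcsin, Complex.norm_eq_sqrt_sq_add_sq]
    congr 1
    linarith
  ext i
  fin_cases i
  · simp [geographic, hcos, Complex.norm_mul_cos_arg]
  · simp [geographic, hcos, Complex.norm_mul_sin_arg]
  · simp [geographic, sin_arcsin hlow hup]

theorem hausdorffMeasure_S2_lt_top : μH[2] S2 < ∞ := by
  have hK : IsCompact (Icc (-(π / 2)) (π / 2) ×ˢ Icc (-π) π) := isCompact_Icc.prod isCompact_Icc
  obtain ⟨K, hLip⟩ :=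
    contDiff_geographic.locallyLipschitz.locallyLipschitzOn.exists_lipschitzOnWith_of_compact hK
  calc μH[2] S2 ≤ μH[2] (geographic '' _) := measure_mono S2_subset_image_geographic
    _ ≤ (K : ℝ≥0∞) ^ (2 : ℝ) * μH[2] (Icc (-(π / 2)) (π / 2) ×ˢ Icc (-π) π) :=
      hLip.hausdorffMeasure_image_le zero_le_two
    _ < ∞ := by
      rw [hausdorffMeasure_prod_real]
      exact ENNReal.mul_lt_top (by simp) hK.measure_lt_top

theorem hausdorffMeasure_S2_ne_zero : μH[2] S2 ≠ 0 := by
  intro hzero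
  let proj : Rn 3 → ℝ × ℝ := fun x => (x 0, x 1)
  have hproj : LipschitzWith 1 proj := LipschitzWith.of_dist_le_mul fun x y => by
    rw [NNReal.coe_one, one_mul, Prod.dist_eq]
    exact max_le (PiLp.dist_apply_le x y 0) (PiLp.dist_apply_le x y 1)
  have hball : ball (0 : ℝ × ℝ) (1 / 2) ⊆ proj '' S2 := by
    rintro ⟨a, b⟩ hab
    simp only [mem_ball_zero_iff, Prod.norm_def, max_lt_iff, norm_eq_abs, abs_lt] at hab
    have hsq : 0 ≤ 1 - a ^ 2 - b ^ 2 := by nlinarith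
    exact ⟨!₂[a, b, √(1 - a ^ 2 - b ^ 2)], mem_S2_iff.2 (by simp [sq_sqrt hsq]), by simp [proj]⟩
  have himage := (hproj.lipschitzOnWith (s := S2)).hausdorffMeasure_image_le (d := 2) zero_le_two
  rw [hzero, mul_zero, hausdorffMeasure_prod_real] at himage
  exact (measure_ball_pos volume (0 : ℝ × ℝ) one_half_pos).not_ge
    ((measure_mono hball).trans himage)

instance : IsFiniteMeasure ((μH[2] : Measure (Rn 3)).restrict S2) :=
  ⟨by simpa using hausdorffMeasure_S2_lt_top⟩

theorem exists_hausdorffMeasure_restrict_S2_eq_smul :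
    ∃ c : ℝ≥0∞, c ≠ 0 ∧ c ≠ ∞ ∧ μH[2].restrict S2 = c • areaMeasure :=
  (isUniformlyDistributedOn_sphere map_hausdorffMeasure_restrict_S2
    (ae_restrict_mem measurableSet_S2) (geographic_mem_S2 0)).exists_eq_smul
    (isUniformlyDistributedOn_sphere map_areaMeasure ae_areaMeasure_mem_S2 (geographic_mem_S2 0))
    (by simpa using hausdorffMeasure_S2_ne_zero) areaMeasure_ne_zero

end HausdorffSphere

/-! ### The slit sphere -/

section SlitSpace

open Real

/-- The cone over `S² ∖ E₀`, that is `ℝ³` without the closed half plane `{x ≤ 0, y = 0}`. -/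
def slitSpace : Set (Rn 3) := {x | 0 < x 0 ∨ x 1 ≠ 0}

theorem isOpen_slitSpace : IsOpen slitSpace := by
  have hcoord (i : Fin 3) : Continuous fun x : Rn 3 => x i := by fun_prop
  exact (isOpen_lt continuous_const (hcoord 0)).union (isOpen_ne_fun (hcoord 1) continuous_const)

theorem smul_mem_slitSpace_iff {t : ℝ} (ht : 0 < t) {x : Rn 3} :
    t • x ∈ slitSpace ↔ x ∈ slitSpace := by
  simp [slitSpace, ht, ht.ne']

theorem ne_zero_of_mem_slitSpace {x : Rn 3} (hx : x ∈ slitSpace) : x ≠ 0 := by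
  rintro rfl
  simp [slitSpace] at hx

theorem geographic_mem_slitSpace {z : ℝ × ℝ} (hz₁ : z.1 ∈ latitudeRange)
    (hz₂ : z.2 ∈ longitudeRange) : geographic z ∈ slitSpace := by
  have hcos := cos_pos_of_mem_latitudeRange hz₁
  by_cases hsin : sin z.2 = 0
  · have hzero : z.2 = 0 := (sin_eq_zero_iff_of_lt_of_lt hz₂.1 hz₂.2).1 hsin
    exact .inl (by simp [geographic, hzero, hcos])
  · exact .inr (by simp [geographic, hcos.ne', hsin])

theorem mem_halfCircle_iff {x : Rn 3} (hx : x ∈ S2) : x ∈ halfCircle ↔ x ∉ slitSpace := by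
  simp only [slitSpace, mem_ofPred_eq, not_or, not_lt, not_not]
  constructor
  · rintro ⟨φ, hφ, h₀, h₁, -⟩
    exact ⟨by linarith [cos_nonneg_of_mem_Icc hφ], h₁⟩
  · rintro ⟨h₀, h₁⟩
    rw [mem_S2_iff, h₁] at hx
    have hsin : sin (arcsin (x 2)) = x 2 := sin_arcsin (by nlinarith) (by nlinarith)
    have hcos : cos (arcsin (x 2)) = -x 0 := by
      rw [cos_arcsin, show 1 - x 2 ^ 2 = (-x 0) ^ 2 by linarith, sqrt_sq (by linarith)]
    exact ⟨arcsin (x 2), arcsin_mem_Icc _, by rw [hcos, neg_neg], h₁, hsin.symm⟩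

theorem S2_sdiff_halfCircle : S2 \ halfCircle = slitSpace ∩ S2 := by
  ext x
  rw [Set.mem_sdiff, mem_inter_iff, and_comm, and_congr_left_iff]
  exact fun hx => by rw [mem_halfCircle_iff hx, not_not]

theorem coneOver_S2_sdiff_halfCircle : coneOver (S2 \ halfCircle) = slitSpace := by
  rw [S2_sdiff_halfCircle]
  ext z
  constructor
  · rintro ⟨t, ht, y, hy, rfl⟩
    exact (smul_mem_slitSpace_iff ht).2 hy.1
  · intro hz
    have hnorm : 0 < ‖z‖ := norm_pos_iff.2 (ne_zero_of_mem_slitSpace hz)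
    refine ⟨‖z‖, hnorm, ‖z‖⁻¹ • z, ⟨(smul_mem_slitSpace_iff (inv_pos.2 hnorm)).2 hz, ?_⟩,
      (smul_inv_smul₀ hnorm.ne' z).symm⟩
    simp [S2, norm_smul, hnorm.ne']

theorem ae_mem_coordinateRange : ∀ᵐ z ∂latitudeMeasure.prod longitudeMeasure,
    z.1 ∈ latitudeRange ∧ z.2 ∈ longitudeRange :=
  (Measure.quasiMeasurePreserving_fst.ae ae_mem_latitudeRange).and
    (Measure.quasiMeasurePreserving_snd.ae ae_mem_longitudeRange)

theorem ae_areaMeasure_mem_slitSpace : ∀ᵐ x ∂areaMeasure, x ∈ slitSpace :=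
  (ae_map_iff measurable_geographic.aemeasurable isOpen_slitSpace.measurableSet).2
    (ae_mem_coordinateRange.mono fun _ hz => geographic_mem_slitSpace hz.1 hz.2)

theorem exists_hausdorffMeasure_eq_smul_areaMeasure : ∃ c : ℝ≥0∞, c ≠ 0 ∧ c ≠ ∞ ∧
    μH[2].restrict S2 = c • areaMeasure ∧ μH[2].restrict (S2 \ halfCircle) = c • areaMeasure := by
  obtain ⟨c, hc₀, hc, hS2⟩ := exists_hausdorffMeasure_restrict_S2_eq_smul
  refine ⟨c, hc₀, hc, hS2, ?_⟩
  rw [S2_sdiff_halfCircle, ← Measure.restrict_restrict isOpen_slitSpace.measurableSet, hS2]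
  exact Measure.restrict_eq_self_of_ae_mem (Measure.ae_smul_measure ae_areaMeasure_mem_slitSpace c)

end SlitSpace

/-! ### Homogeneous functions -/

section Rademacher

variable {E F : Type*} [NormedAddCommGroup E] [NormedSpace ℝ E] [FiniteDimensional ℝ E]
  [MeasurableSpace E] [BorelSpace E] [NormedAddCommGroup F] [NormedSpace ℝ F]
  [FiniteDimensional ℝ F] {μ : Measure E} [μ.IsAddHaarMeasure] {f : E → F} {U : Set E}

theorem ae_differentiableAt_of_locallyLipschitzOn (hf : LocallyLipschitzOn U f) (hU : IsOpen U) :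
    ∀ᵐ x ∂μ, x ∈ U → DifferentiableAt ℝ f x := by
  rw [ae_iff]
  refine measure_null_of_locally_null _ fun x hx => ?_
  simp only [Classical.not_imp, mem_ofPred_eq] at hx
  obtain ⟨K, s, hs, hK⟩ := hf hx.1
  obtain ⟨w, hws, hw, hxw⟩ := _root_.mem_nhds_iff.1 (hU.nhdsWithin_eq hx.1 ▸ hs)
  have hdiff := (hK.mono hws).ae_differentiableWithinAt (μ := μ) hw.measurableSet
  rw [ae_restrict_iff' hw.measurableSet, ae_iff] at hdiff
  refine ⟨w ∩ {y | ¬(y ∈ U → DifferentiableAt ℝ f y)}, inter_mem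
    (mem_nhdsWithin_of_mem_nhds (hw.mem_nhds hxw)) self_mem_nhdsWithin, ?_⟩
  refine measure_mono_null (fun y hy => ?_) hdiff
  exact fun hyd => hy.2 fun _ => (hyd hy.1).differentiableAt (hw.mem_nhds hy.1)

end Rademacher

section Homogeneous

variable {E : Type*} [NormedAddCommGroup E] [InnerProductSpace ℝ E] {g : E → ℝ}

/-- `g` is positively homogeneous of degree `0`. -/
def IsRadiallyConstant (g : E → ℝ) : Prop := ∀ (x : E) (t : ℝ), 0 < t → g (t • x) = g x

namespace IsRadiallyConstant

theorem differentiableAt_smul (hg : IsRadiallyConstant g) {t : ℝ} (ht : 0 < t) {x : E}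
    (hx : DifferentiableAt ℝ g x) : DifferentiableAt ℝ g (t • x) := by
  have hcomp : g = fun y => g (t⁻¹ • y) := funext fun y => (hg y _ (inv_pos.2 ht)).symm
  rw [hcomp]
  refine DifferentiableAt.comp (g := g) (f := fun y => t⁻¹ • y) (t • x) ?_ (by fun_prop)
  rwa [inv_smul_smul₀ ht.ne']

theorem inner_gradient_self [CompleteSpace E] (hg : IsRadiallyConstant g) {x : E}
    (hx : DifferentiableAt ℝ g x) : inner ℝ (gradient g x) x = 0 := by
  have hray : HasDerivAt (fun t : ℝ => t • x) x 1 := by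
    simpa using (hasDerivAt_id (1 : ℝ)).smul_const x
  have hconst : (g ∘ fun t : ℝ => t • x) =ᶠ[𝓝 1] fun _ => g x := by
    filter_upwards [Ioi_mem_nhds one_pos] with t ht using hg x t ht
  have hderiv : HasDerivAt (g ∘ fun t : ℝ => t • x) (fderiv ℝ g x x) 1 :=
    HasFDerivAt.comp_hasDerivAt 1 (by simpa using hx.hasFDerivAt) hray
  rw [gradient, InnerProductSpace.toDual_symm_apply]
  exact hderiv.unique ((hasDerivAt_const 1 (g x)).congr_of_eventuallyEq hconst)

end IsRadiallyConstant

theorem hasDerivAt_comp_inner_gradient [CompleteSpace E] {γ : ℝ → E} {γ' : E} {t : ℝ}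
    (hg : DifferentiableAt ℝ g (γ t)) (hγ : HasDerivAt γ γ' t) :
    HasDerivAt (fun t => g (γ t)) (inner ℝ (gradient g (γ t)) γ') t := by
  rw [gradient, InnerProductSpace.toDual_symm_apply]
  exact hg.hasFDerivAt.comp_hasDerivAt t hγ

theorem measurable_gradient [CompleteSpace E] [MeasurableSpace E] [BorelSpace E] (g : E → ℝ) :
    Measurable (gradient g) :=
  (LinearIsometryEquiv.continuous _).measurable.comp (measurable_fderiv ℝ g)

end Homogeneous

theorem ae_areaMeasure_of_ae_volume {P : Rn 3 → Prop} (hmeas : MeasurableSet {x | P x})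
    (hcone : ∀ (x : Rn 3) (t : ℝ), 0 < t → P x → P (t • x)) (hP : ∀ᵐ x, P x) :
    ∀ᵐ x ∂areaMeasure, P x := by
  rw [areaMeasure_eq_smul_map_normalize]
  refine Measure.ae_smul_measure ((ae_map_iff (by fun_prop) hmeas).2 ?_) _
  filter_upwards [ae_restrict_of_ae hP,
    ae_restrict_of_ae (compl_mem_ae_iff.2 (measure_singleton (0 : Rn 3)))] with x hx hx₀
  exact hcone x _ (inv_pos.2 (norm_pos_iff.2 hx₀)) hx

/-! ### The energy in geographic coordinates -/

section TangentFrame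

open Real

/-- The partial derivative of `geographic` in the latitude. -/
def northTangent (z : ℝ × ℝ) : Rn 3 :=
  !₂[-sin z.1 * cos z.2, -sin z.1 * sin z.2, cos z.1]

/-- The partial derivative of `geographic` in the longitude, a vector of norm `|cos z.1|`. -/
def eastTangent (z : ℝ × ℝ) : Rn 3 :=
  !₂[-cos z.1 * sin z.2, cos z.1 * cos z.2, 0]

@[fun_prop]
theorem measurable_northTangent : Measurable northTangent := by
  refine (PiLp.continuous_toLp 2 _).measurable.comp (measurable_pi_iff.2 fun i => ?_)
  fin_cases i <;>
    simp only [Fin.zero_eta, Fin.mk_one, Fin.reduceFinMk, Matrix.cons_val] <;>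
    fun_prop

@[fun_prop]
theorem measurable_eastTangent : Measurable eastTangent := by
  refine (PiLp.continuous_toLp 2 _).measurable.comp (measurable_pi_iff.2 fun i => ?_)
  fin_cases i <;>
    simp only [Fin.zero_eta, Fin.mk_one, Fin.reduceFinMk, Matrix.cons_val] <;>
    fun_prop

theorem hasDerivAt_vec3 {a b c : ℝ → ℝ} {a' b' c' t : ℝ} (ha : HasDerivAt a a' t)
    (hb : HasDerivAt b b' t) (hc : HasDerivAt c c' t) :
    HasDerivAt (fun t => (!₂[a t, b t, c t] : Rn 3)) !₂[a', b', c'] t := by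
  have hpi : HasDerivAt (fun t => ![a t, b t, c t]) ![a', b', c'] t := by
    rw [hasDerivAt_pi]
    intro i
    fin_cases i <;> assumption
  exact (PiLp.hasFDerivAt_toLp (𝕜 := ℝ) 2 _).comp_hasDerivAt t hpi

theorem hasDerivAt_geographic_latitude (z : ℝ × ℝ) :
    HasDerivAt (fun φ => geographic (φ, z.2)) (northTangent z) z.1 :=
  hasDerivAt_vec3 ((hasDerivAt_cos z.1).mul_const (cos z.2))
    ((hasDerivAt_cos z.1).mul_const (sin z.2)) (hasDerivAt_sin z.1)

theorem hasDerivAt_geographic_longitude (z : ℝ × ℝ) :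
    HasDerivAt (fun θ => geographic (z.1, θ)) (eastTangent z) z.2 := by
  have hcos : HasDerivAt (fun θ => cos z.1 * cos θ) (-cos z.1 * sin z.2) z.2 := by
    simpa using (hasDerivAt_cos z.2).const_mul (cos z.1)
  exact hasDerivAt_vec3 hcos ((hasDerivAt_sin z.2).const_mul (cos z.1))
    (hasDerivAt_const z.2 (sin z.1))

theorem inner_vec3 (a : Rn 3) (b₀ b₁ b₂ : ℝ) :
    inner ℝ a !₂[b₀, b₁, b₂] = b₀ * a 0 + b₁ * a 1 + b₂ * a 2 := by
  simp [PiLp.inner_apply, Fin.sum_univ_three]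

theorem norm_sq_eq_inner_tangents {z : ℝ × ℝ} (hz : cos z.1 ≠ 0) {a : Rn 3}
    (ha : inner ℝ a (geographic z) = 0) :
    ‖a‖ ^ 2 = inner ℝ a (northTangent z) ^ 2 + (inner ℝ a (eastTangent z) / cos z.1) ^ 2 := by
  have heast : inner ℝ a (eastTangent z) / cos z.1 = -sin z.2 * a 0 + cos z.2 * a 1 := by
    rw [eastTangent, inner_vec3]
    field_simp
    ring
  have hnorth : inner ℝ a (northTangent z) =
      -sin z.1 * (cos z.2 * a 0 + sin z.2 * a 1) + cos z.1 * a 2 := by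
    rw [northTangent, inner_vec3]
    ring
  have hnormal : cos z.1 * (cos z.2 * a 0 + sin z.2 * a 1) + sin z.1 * a 2 = 0 := by
    rw [← ha, geographic, inner_vec3]
    ring
  rw [EuclideanSpace.real_norm_sq_eq, Fin.sum_univ_three, heast, hnorth]
  linear_combination
    (cos z.1 * (cos z.2 * a 0 + sin z.2 * a 1) + sin z.1 * a 2) * hnormal
    - ((cos z.2 * a 0 + sin z.2 * a 1) ^ 2 + a 2 ^ 2) * sin_sq_add_cos_sq z.1
    - (a 0 ^ 2 + a 1 ^ 2) * sin_sq_add_cos_sq z.2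

end TangentFrame

section LowerBound

variable {g : Rn 3 → ℝ}

theorem ae_differentiableAt_geographic (hg : IsRadiallyConstant g)
    (hlip : LocallyLipschitzOn slitSpace g) :
    ∀ᵐ z ∂latitudeMeasure.prod longitudeMeasure, DifferentiableAt ℝ g (geographic z) := by
  have hmeas : MeasurableSet {x | x ∈ slitSpace → DifferentiableAt ℝ g x} :=
    isOpen_slitSpace.measurableSet.imp (measurableSet_of_differentiableAt ℝ g)
  have hae : ∀ᵐ x ∂areaMeasure, x ∈ slitSpace → DifferentiableAt ℝ g x :=
    ae_areaMeasure_of_ae_volume hmeas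
      (fun x t ht hx htx => hg.differentiableAt_smul ht (hx ((smul_mem_slitSpace_iff ht).1 htx)))
      (ae_differentiableAt_of_locallyLipschitzOn hlip isOpen_slitSpace)
  filter_upwards [(ae_map_iff measurable_geographic.aemeasurable hmeas).1 hae,
    ae_mem_coordinateRange] with z hz hrange
  exact hz (geographic_mem_slitSpace hrange.1 hrange.2)

theorem hasPartialDerivs_comp_geographic (hmeas : Measurable g) (hg : IsRadiallyConstant g)
    (hlip : LocallyLipschitzOn slitSpace g) :
    HasPartialDerivs (fun φ θ => g (geographic (φ, θ)))
      (fun φ θ => inner ℝ (gradient g (geographic (φ, θ))) (northTangent (φ, θ)))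
      (fun φ θ => inner ℝ (gradient g (geographic (φ, θ))) (eastTangent (φ, θ))) where
  measurable := hmeas.comp measurable_geographic
  measurable_latitude :=
    ((measurable_gradient g).comp measurable_geographic).inner measurable_northTangent
  measurable_longitude :=
    ((measurable_gradient g).comp measurable_geographic).inner measurable_eastTangent
  locallyLipschitzOn_latitude θ hθ :=
    locallyLipschitzOn_comp hlip ((contDiff_geographic.comp (by fun_prop :
      ContDiff ℝ 1 fun φ : ℝ => (φ, θ))).locallyLipschitz.locallyLipschitzOn)
      fun _ hφ => geographic_mem_slitSpace hφ hθ
  locallyLipschitzOn_longitude φ hφ :=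
    locallyLipschitzOn_comp hlip ((contDiff_geographic.comp (by fun_prop :
      ContDiff ℝ 1 fun θ : ℝ => (φ, θ))).locallyLipschitz.locallyLipschitzOn)
      fun _ hθ => geographic_mem_slitSpace hφ hθ
  hasDerivAt_latitude := by
    have hdiff : MeasurableSet {z : ℝ × ℝ | DifferentiableAt ℝ g (geographic z)} :=
      measurable_geographic (measurableSet_of_differentiableAt ℝ g)
    filter_upwards [(Measure.ae_ae_comm hdiff).1
      (Measure.ae_ae_of_ae_prod (ae_differentiableAt_geographic hg hlip))] with θ hθ
    filter_upwards [hθ] with φ hφ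
    exact hasDerivAt_comp_inner_gradient hφ (hasDerivAt_geographic_latitude (φ, θ))
  hasDerivAt_longitude := by
    filter_upwards [Measure.ae_ae_of_ae_prod (ae_differentiableAt_geographic hg hlip)] with φ hφ
    filter_upwards [hφ] with θ hθ
    exact hasDerivAt_comp_inner_gradient hθ (hasDerivAt_geographic_longitude (φ, θ))

theorem lintegral_gradient_eq_add (hg : IsRadiallyConstant g)
    (hlip : LocallyLipschitzOn slitSpace g) :
    ∫⁻ x, ‖gradient g x‖ₑ ^ 2 ∂areaMeasure =
      (∫⁻ z, ‖inner ℝ (gradient g (geographic z)) (northTangent z)‖ₑ ^ 2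
        ∂latitudeMeasure.prod longitudeMeasure) +
      ∫⁻ z, ‖inner ℝ (gradient g (geographic z)) (eastTangent z) / Real.cos z.1‖ₑ ^ 2
        ∂latitudeMeasure.prod longitudeMeasure := by
  have hgrad : Measurable (gradient g) := measurable_gradient g
  rw [lintegral_areaMeasure (by fun_prop), ← lintegral_add_left (by fun_prop)]
  refine lintegral_congr_ae ?_
  filter_upwards [ae_differentiableAt_geographic hg hlip, ae_mem_coordinateRange] with z hz hrange
  rw [← ofReal_norm, ← ENNReal.ofReal_pow (norm_nonneg _), norm_sq_eq_inner_tangents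
    (cos_pos_of_mem_latitudeRange hrange.1).ne' (hg.inner_gradient_self hz),
    ENNReal.ofReal_add (sq_nonneg _) (sq_nonneg _), enorm_sq_eq_ofReal_sq, enorm_sq_eq_ofReal_sq]

theorem three_quarters_mul_lintegral_areaMeasure_le_of_measurable (hmeas : Measurable g)
    (hg : IsRadiallyConstant g) (hlip : LocallyLipschitzOn slitSpace g)
    (hg₂ : MemLp g 2 areaMeasure) (hmean : ∫ x, g x ∂areaMeasure = 0) :
    ENNReal.ofReal (3 / 4) * ∫⁻ x, ‖g x‖ₑ ^ 2 ∂areaMeasure ≤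
      ∫⁻ x, ‖gradient g x‖ₑ ^ 2 ∂areaMeasure := by
  rw [lintegral_areaMeasure (by fun_prop), lintegral_gradient_eq_add hg hlip]
  rw [areaMeasure, integral_map (by fun_prop) hmeas.aestronglyMeasurable] at hmean
  exact (hasPartialDerivs_comp_geographic hmeas hg hlip).three_quarters_mul_lintegral_le
    (hg₂.comp_of_map (by fun_prop)) hmean

theorem aestronglyMeasurable_areaMeasure (hlip : LocallyLipschitzOn slitSpace g) :
    AEStronglyMeasurable g areaMeasure := by
  rw [← Measure.restrict_eq_self_of_ae_mem ae_areaMeasure_mem_slitSpace]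
  exact hlip.continuousOn.aestronglyMeasurable isOpen_slitSpace.measurableSet

theorem measurable_indicator_slitSpace (hlip : LocallyLipschitzOn slitSpace g) :
    Measurable (slitSpace.indicator g) := by
  classical
  rw [← Set.piecewise_eq_indicator]
  exact hlip.continuousOn.measurable_piecewise continuousOn_const isOpen_slitSpace.measurableSet

theorem isRadiallyConstant_indicator_slitSpace (hg : IsRadiallyConstant g) :
    IsRadiallyConstant (slitSpace.indicator g) := fun x t ht => by
  classical
  simp only [indicator_apply, smul_mem_slitSpace_iff ht, hg x t ht]

theorem three_quarters_mul_lintegral_areaMeasure_le (hg : IsRadiallyConstant g)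
    (hlip : LocallyLipschitzOn slitSpace g) (hg₂ : MemLp g 2 areaMeasure)
    (hmean : ∫ x, g x ∂areaMeasure = 0) :
    ENNReal.ofReal (3 / 4) * ∫⁻ x, ‖g x‖ₑ ^ 2 ∂areaMeasure ≤
      ∫⁻ x, ‖gradient g x‖ₑ ^ 2 ∂areaMeasure := by
  have hEqOn : EqOn (slitSpace.indicator g) g slitSpace := eqOn_indicator
  have hae : slitSpace.indicator g =ᵐ[areaMeasure] g := ae_areaMeasure_mem_slitSpace.mono hEqOn
  have hgrad : gradient (slitSpace.indicator g) =ᵐ[areaMeasure] gradient g :=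
    ae_areaMeasure_mem_slitSpace.mono fun x hx =>
      (hEqOn.eventuallyEq_of_mem (isOpen_slitSpace.mem_nhds hx)).gradient_eq
  have hbound := three_quarters_mul_lintegral_areaMeasure_le_of_measurable
    (measurable_indicator_slitSpace hlip) (isRadiallyConstant_indicator_slitSpace hg)
    (locallyLipschitzOn_congr hlip hEqOn) (hg₂.ae_eq hae.symm) (by rwa [integral_congr_ae hae])
  calc ENNReal.ofReal (3 / 4) * ∫⁻ x, ‖g x‖ₑ ^ 2 ∂areaMeasure
    _ = ENNReal.ofReal (3 / 4) * ∫⁻ x, ‖slitSpace.indicator g x‖ₑ ^ 2 ∂areaMeasure :=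
      congrArg _ (lintegral_congr_ae (hae.symm.fun_comp (‖·‖ₑ ^ 2)))
    _ ≤ ∫⁻ x, ‖gradient (slitSpace.indicator g) x‖ₑ ^ 2 ∂areaMeasure := hbound
    _ = ∫⁻ x, ‖gradient g x‖ₑ ^ 2 ∂areaMeasure :=
      lintegral_congr_ae (hgrad.fun_comp (‖·‖ₑ ^ 2))

end LowerBound

section Admissible

variable {g : Rn 3 → ℝ}

theorem locLipOn_iff_locallyLipschitzOn {N : ℕ} {u : Rn N → ℝ} {s : Set (Rn N)} :
    LocLipOn N u s ↔ LocallyLipschitzOn s u := by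
  refine forall₂_congr fun x _ => ?_
  constructor
  · exact fun ⟨t, ht, C, hC⟩ => ⟨C, t, ht, hC⟩
  · exact fun ⟨C, t, ht, hC⟩ => ⟨t, ht, C, hC⟩

theorem exists_integrals_eq_mul_areaMeasure : ∃ c : ℝ≥0∞, c ≠ 0 ∧ c ≠ ∞ ∧ ∀ g : Rn 3 → ℝ,
    (∫⁻ y in S2, ENNReal.ofReal (g y ^ 2) ∂μH[2] = c * ∫⁻ x, ‖g x‖ₑ ^ 2 ∂areaMeasure) ∧
    (∫⁻ y in S2 \ halfCircle, ENNReal.ofReal (‖gradient g y‖ ^ 2) ∂μH[2] =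
      c * ∫⁻ x, ‖gradient g x‖ₑ ^ 2 ∂areaMeasure) ∧
    ∫ y in S2, g y ∂μH[2] = c.toReal * ∫ x, g x ∂areaMeasure := by
  obtain ⟨c, hc₀, hc, hS2, hslit⟩ := exists_hausdorffMeasure_eq_smul_areaMeasure
  refine ⟨c, hc₀, hc, fun g => ⟨?_, ?_, ?_⟩⟩
  · simp only [hS2, lintegral_smul_measure, smul_eq_mul, enorm_sq_eq_ofReal_sq]
  · simp only [hslit, lintegral_smul_measure, smul_eq_mul, ← ofReal_norm,
      ENNReal.ofReal_pow (norm_nonneg _)]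
  · rw [hS2, integral_smul_measure, smul_eq_mul]

theorem sphAdmissible_halfCircle_iff : SphAdmissible halfCircle g ↔
    IsRadiallyConstant g ∧ LocallyLipschitzOn slitSpace g ∧
      0 < ∫⁻ x, ‖g x‖ₑ ^ 2 ∂areaMeasure ∧ ∫⁻ x, ‖g x‖ₑ ^ 2 ∂areaMeasure < ∞ ∧
      ∫⁻ x, ‖gradient g x‖ₑ ^ 2 ∂areaMeasure < ∞ ∧ ∫ x, g x ∂areaMeasure = 0 := by
  obtain ⟨c, hc₀, hc, hintegrals⟩ := exists_integrals_eq_mul_areaMeasure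
  obtain ⟨hsq, henergy, hmean⟩ := hintegrals g
  have hfinite (a : ℝ≥0∞) : c * a < ∞ ↔ a < ∞ :=
    ⟨fun h => ENNReal.lt_top_of_mul_ne_top_right h.ne hc₀, ENNReal.mul_lt_top hc.lt_top⟩
  have hzero (a : ℝ) : c.toReal * a = 0 ↔ a = 0 := by simp [ENNReal.toReal_eq_zero_iff, hc₀, hc]
  rw [SphAdmissible, coneOver_S2_sdiff_halfCircle, locLipOn_iff_locallyLipschitzOn, hsq, henergy,
    hmean, hfinite, hfinite, hzero, pos_iff_ne_zero, mul_ne_zero_iff, and_iff_right hc₀,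
    ← pos_iff_ne_zero, IsRadiallyConstant]

theorem three_quarters_mul_lintegral_le_of_sphAdmissible (hg : SphAdmissible halfCircle g) :
    ENNReal.ofReal (3 / 4) * (∫⁻ y in S2, ENNReal.ofReal (g y ^ 2) ∂μH[2]) ≤
      ∫⁻ y in S2 \ halfCircle, ENNReal.ofReal (‖gradient g y‖ ^ 2) ∂μH[2] := by
  obtain ⟨hradial, hlip, -, hsq, -, hmean⟩ := sphAdmissible_halfCircle_iff.1 hg
  obtain ⟨c, -, -, hintegrals⟩ := exists_integrals_eq_mul_areaMeasure
  rw [(hintegrals g).1, (hintegrals g).2.1, mul_left_comm]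
  gcongr
  exact three_quarters_mul_lintegral_areaMeasure_le hradial hlip
    ((memLp_two_iff_lintegral_enorm_sq (aestronglyMeasurable_areaMeasure hlip)).2 hsq) hmean

end Admissible

/-! ### The cracktip function -/

section Cracktip

open Real

theorem isRadiallyConstant_cracktip0 : IsRadiallyConstant cracktip0 := fun x t ht => by
  have hdir : ‖t • x‖⁻¹ • t • x = ‖x‖⁻¹ • x := by
    rw [norm_smul, norm_of_nonneg ht.le, smul_smul]
    congr 1
    field_simp
  rw [cracktip0, hdir, cracktip0]

theorem contDiffAt_cracktip {x : Rn 3} (hx : x ∈ slitSpace) : ContDiffAt ℝ 1 cracktip x := by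
  have hslit : (x 0 : ℂ) + (x 1 : ℂ) * Complex.I ∈ Complex.slitPlane := by
    simpa [Complex.mem_slitPlane_iff, slitSpace] using hx
  have hcoord (i : Fin 3) : ContDiffAt ℝ 1 (fun y : Rn 3 => (y i : ℂ)) x :=
    (Complex.ofRealCLM.comp (EuclideanSpace.proj (𝕜 := ℝ) i)).contDiff.contDiffAt
  have hplane : ContDiffAt ℝ 1 (fun y : Rn 3 => (y 0 : ℂ) + (y 1 : ℂ) * Complex.I) x :=
    (hcoord 0).add ((hcoord 1).mul contDiffAt_const)
  have hsqrt : ContDiffAt ℝ 1 (fun w : ℂ => w ^ ((1 : ℂ) / 2))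
      ((x 0 : ℂ) + (x 1 : ℂ) * Complex.I) :=
    (analyticAt_id.cpow analyticAt_const hslit).contDiffAt.restrict_scalars ℝ
  exact Complex.imCLM.contDiff.contDiffAt.comp x
    (ContDiffAt.comp (g := fun w : ℂ => w ^ ((1 : ℂ) / 2)) x hsqrt hplane)

theorem contDiffAt_cracktip0 {x : Rn 3} (hx : x ∈ slitSpace) : ContDiffAt ℝ 1 cracktip0 x := by
  have hx₀ := ne_zero_of_mem_slitSpace hx
  have hnormalize : ContDiffAt ℝ 1 (fun y : Rn 3 => ‖y‖⁻¹ • y) x :=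
    ((contDiffAt_norm ℝ hx₀).inv (norm_ne_zero_iff.2 hx₀)).smul contDiffAt_id
  have hmem : ‖x‖⁻¹ • x ∈ slitSpace :=
    (smul_mem_slitSpace_iff (inv_pos.2 (norm_pos_iff.2 hx₀))).2 hx
  exact ContDiffAt.comp (f := fun y : Rn 3 => ‖y‖⁻¹ • y) x (contDiffAt_cracktip hmem) hnormalize

theorem locallyLipschitzOn_cracktip0 : LocallyLipschitzOn slitSpace cracktip0 := fun x hx => by
  obtain ⟨K, t, ht, hK⟩ := (contDiffAt_cracktip0 hx).exists_lipschitzOnWith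
  exact ⟨K, t, mem_nhdsWithin_of_mem_nhds ht, hK⟩

@[fun_prop]
theorem measurable_cracktip0 : Measurable cracktip0 := by
  unfold cracktip0 cracktip
  fun_prop

variable {z : ℝ × ℝ}

theorem cracktip0_geographic (hz₁ : z.1 ∈ latitudeRange) (hz₂ : z.2 ∈ longitudeRange) :
    cracktip0 (geographic z) = √(cos z.1) * sin (z.2 / 2) := by
  have hcos := cos_pos_of_mem_latitudeRange hz₁
  have hpolar : ((geographic z 0 : ℝ) : ℂ) + (geographic z 1 : ℝ) * Complex.I =
      (cos z.1 : ℝ) * (Complex.cos z.2 + Complex.sin z.2 * Complex.I) := by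
    simp only [geographic, Matrix.cons_val_zero, Matrix.cons_val_one, Complex.ofReal_mul,
      Complex.ofReal_cos, Complex.ofReal_sin]
    ring
  have hlog : Complex.log ((cos z.1 : ℝ) * (Complex.cos z.2 + Complex.sin z.2 * Complex.I)) =
      (log (cos z.1) : ℝ) + z.2 * Complex.I := by
    rw [← Complex.exp_mul_I, Complex.log_ofReal_mul hcos (Complex.exp_ne_zero _),
      Complex.log_exp (by simpa using hz₂.1) (by simpa using hz₂.2.le)]
  have hne : (cos z.1 : ℝ) * (Complex.cos z.2 + Complex.sin z.2 * Complex.I) ≠ 0 := by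
    rw [← Complex.exp_mul_I]
    exact mul_ne_zero (Complex.ofReal_ne_zero.2 hcos.ne') (Complex.exp_ne_zero _)
  have hhalf : ((log (cos z.1) : ℝ) + z.2 * Complex.I) * (1 / 2) =
      ((log (cos z.1) / 2 : ℝ) : ℂ) + ((z.2 / 2 : ℝ) : ℂ) * Complex.I := by
    push_cast
    ring
  rw [cracktip0, norm_geographic, inv_one, one_smul, cracktip, hpolar,
    Complex.cpow_def_of_ne_zero hne, hlog, hhalf, Complex.exp_im]
  simp [exp_half, exp_log hcos]

theorem inner_gradient_cracktip0_northTangent (hz₁ : z.1 ∈ latitudeRange)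
    (hz₂ : z.2 ∈ longitudeRange) :
    inner ℝ (gradient cracktip0 (geographic z)) (northTangent z) =
      -sin z.1 / (2 * √(cos z.1)) * sin (z.2 / 2) := by
  have hdiff := (contDiffAt_cracktip0 (geographic_mem_slitSpace hz₁ hz₂)).differentiableAt
    one_ne_zero
  have hexplicit : HasDerivAt (fun φ => √(cos φ) * sin (z.2 / 2))
      (-sin z.1 / (2 * √(cos z.1)) * sin (z.2 / 2)) z.1 :=
    ((hasDerivAt_cos z.1).sqrt (cos_pos_of_mem_latitudeRange hz₁).ne').mul_const _
  refine (hasDerivAt_comp_inner_gradient hdiff (hasDerivAt_geographic_latitude z)).unique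
    (hexplicit.congr_of_eventuallyEq ?_)
  filter_upwards [isOpen_Ioo.mem_nhds hz₁] with φ hφ using cracktip0_geographic hφ hz₂

theorem inner_gradient_cracktip0_eastTangent (hz₁ : z.1 ∈ latitudeRange)
    (hz₂ : z.2 ∈ longitudeRange) :
    inner ℝ (gradient cracktip0 (geographic z)) (eastTangent z) =
      √(cos z.1) * (cos (z.2 / 2) * (1 / 2)) := by
  have hdiff := (contDiffAt_cracktip0 (geographic_mem_slitSpace hz₁ hz₂)).differentiableAt
    one_ne_zero
  have hexplicit : HasDerivAt (fun θ : ℝ => √(cos z.1) * sin (θ / 2))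
      (√(cos z.1) * (cos (z.2 / 2) * (1 / 2))) z.2 :=
    (((hasDerivAt_id z.2).div_const 2).sin).const_mul _
  refine (hasDerivAt_comp_inner_gradient hdiff (hasDerivAt_geographic_longitude z)).unique
    (hexplicit.congr_of_eventuallyEq ?_)
  filter_upwards [isOpen_Ioo.mem_nhds hz₂] with θ hθ using cracktip0_geographic hz₁ hθ

theorem lintegral_latitudeMeasure_ofReal_of_hasDerivAt {f ψ ψ' : ℝ → ℝ}
    (hψ : ∀ t, HasDerivAt ψ (ψ' t) t) (hψ' : Continuous ψ')
    (hnonneg : ∀ φ ∈ latitudeRange, 0 ≤ f φ) (hf : ∀ φ ∈ latitudeRange, f φ * cos φ = ψ' φ) :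
    ∫⁻ φ, ENNReal.ofReal (f φ) ∂latitudeMeasure =
      ENNReal.ofReal (ψ (π / 2) - ψ (-(π / 2))) := by
  rw [lintegral_latitudeMeasure, ← lintegral_Ioo_ofReal_deriv (by linarith [pi_pos]) hψ hψ' ?_]
  · refine setLIntegral_congr_fun measurableSet_Ioo fun φ hφ => ?_
    rw [← ENNReal.ofReal_mul (hnonneg φ hφ), hf φ hφ]
  · intro φ hφ
    rw [← hf φ hφ]
    exact mul_nonneg (hnonneg φ hφ) (cos_pos_of_mem_latitudeRange hφ).le

theorem lintegral_cos_latitudeMeasure :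
    ∫⁻ φ, ENNReal.ofReal (cos φ) ∂latitudeMeasure = ENNReal.ofReal (π / 2) := by
  have hderiv (t : ℝ) : HasDerivAt (fun t => (t + sin t * cos t) / 2) (cos t ^ 2) t :=
    (((hasDerivAt_id t).add ((hasDerivAt_sin t).mul (hasDerivAt_cos t))).div_const 2).congr_deriv
      (by linear_combination (-1 / 2 : ℝ) * sin_sq_add_cos_sq t)
  rw [lintegral_latitudeMeasure_ofReal_of_hasDerivAt hderiv (by fun_prop)
    (fun φ hφ => (cos_pos_of_mem_latitudeRange hφ).le) fun φ _ => (sq (cos φ)).symm]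
  congr 1
  simp only [sin_pi_div_two, cos_pi_div_two, mul_zero, add_zero, sin_neg, cos_neg]
  ring

theorem lintegral_sin_sq_div_cos_latitudeMeasure :
    ∫⁻ φ, ENNReal.ofReal (sin φ ^ 2 / 4 / cos φ) ∂latitudeMeasure = ENNReal.ofReal (π / 8) := by
  have hderiv (t : ℝ) : HasDerivAt (fun t => (t - sin t * cos t) / 8) (sin t ^ 2 / 4) t :=
    (((hasDerivAt_id t).sub ((hasDerivAt_sin t).mul (hasDerivAt_cos t))).div_const 8).congr_deriv
      (by linear_combination (-1 / 8 : ℝ) * sin_sq_add_cos_sq t)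
  rw [lintegral_latitudeMeasure_ofReal_of_hasDerivAt hderiv (by fun_prop)
    (fun φ hφ => div_nonneg (by positivity) (cos_pos_of_mem_latitudeRange hφ).le)
    fun φ hφ => div_mul_cancel₀ _ (cos_pos_of_mem_latitudeRange hφ).ne']
  congr 1
  simp only [sin_pi_div_two, cos_pi_div_two, mul_zero, sub_zero, sin_neg, cos_neg]
  ring

theorem lintegral_inv_cos_latitudeMeasure :
    ∫⁻ φ, ENNReal.ofReal (1 / 4 / cos φ) ∂latitudeMeasure = ENNReal.ofReal (π / 4) := by
  rw [lintegral_latitudeMeasure_ofReal_of_hasDerivAt (fun t => (hasDerivAt_id t).div_const 4)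
    continuous_const
    (fun φ hφ => div_nonneg (by positivity) (cos_pos_of_mem_latitudeRange hφ).le)
    fun φ hφ => div_mul_cancel₀ _ (cos_pos_of_mem_latitudeRange hφ).ne']
  congr 1
  simp only [id_eq]
  ring

theorem lintegral_sin_half_sq_longitudeMeasure :
    ∫⁻ θ, ENNReal.ofReal (sin (θ / 2) ^ 2) ∂longitudeMeasure = ENNReal.ofReal π := by
  have hderiv (t : ℝ) : HasDerivAt (fun t => (t - sin t) / 2) (sin (t / 2) ^ 2) t :=
    (((hasDerivAt_id t).sub (hasDerivAt_sin t)).div_const 2).congr_deriv <| by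
      rw [sin_sq_eq_half_sub, mul_div_cancel₀ t two_ne_zero]
      ring
  rw [longitudeMeasure, longitudeRange, lintegral_Ioo_ofReal_deriv (by linarith [pi_pos]) hderiv
    (by fun_prop) fun t _ => sq_nonneg _]
  congr 1
  simp only [sin_pi, sub_zero, sin_neg, neg_zero]
  ring

theorem lintegral_cos_half_sq_longitudeMeasure :
    ∫⁻ θ, ENNReal.ofReal (cos (θ / 2) ^ 2) ∂longitudeMeasure = ENNReal.ofReal π := by
  have hderiv (t : ℝ) : HasDerivAt (fun t => (t + sin t) / 2) (cos (t / 2) ^ 2) t :=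
    (((hasDerivAt_id t).add (hasDerivAt_sin t)).div_const 2).congr_deriv <| by
      rw [cos_sq, mul_div_cancel₀ t two_ne_zero]
      ring
  rw [longitudeMeasure, longitudeRange, lintegral_Ioo_ofReal_deriv (by linarith [pi_pos]) hderiv
    (by fun_prop) fun t _ => sq_nonneg _]
  congr 1
  simp only [sin_pi, add_zero, sin_neg, neg_zero]
  ring

theorem lintegral_enorm_sq_prod_eq_mul {F : ℝ × ℝ → ℝ} {f g : ℝ → ℝ} (hf : Measurable f)
    (hg : Measurable g) (hf₀ : ∀ φ ∈ latitudeRange, 0 ≤ f φ)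
    (hF : ∀ z : ℝ × ℝ, z.1 ∈ latitudeRange → z.2 ∈ longitudeRange → F z ^ 2 = f z.1 * g z.2) :
    ∫⁻ z, ‖F z‖ₑ ^ 2 ∂latitudeMeasure.prod longitudeMeasure =
      (∫⁻ φ, ENNReal.ofReal (f φ) ∂latitudeMeasure) *
        ∫⁻ θ, ENNReal.ofReal (g θ) ∂longitudeMeasure := by
  rw [← lintegral_prod_mul (hf.ennreal_ofReal.aemeasurable) (hg.ennreal_ofReal.aemeasurable)]
  refine lintegral_congr_ae (ae_mem_coordinateRange.mono fun z hz => ?_)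
  simp only [enorm_sq_eq_ofReal_sq, hF z hz.1 hz.2, ENNReal.ofReal_mul (hf₀ z.1 hz.1)]

theorem lintegral_cracktip0_sq :
    ∫⁻ x, ‖cracktip0 x‖ₑ ^ 2 ∂areaMeasure = ENNReal.ofReal (π ^ 2 / 2) := by
  have hsq (z : ℝ × ℝ) (hz₁ : z.1 ∈ latitudeRange) (hz₂ : z.2 ∈ longitudeRange) :
      cracktip0 (geographic z) ^ 2 = cos z.1 * sin (z.2 / 2) ^ 2 := by
    rw [cracktip0_geographic hz₁ hz₂, mul_pow, sq_sqrt (cos_pos_of_mem_latitudeRange hz₁).le]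
  rw [lintegral_areaMeasure (by fun_prop), lintegral_enorm_sq_prod_eq_mul
    (g := fun θ => sin (θ / 2) ^ 2) measurable_cos (by fun_prop)
    (fun φ hφ => (cos_pos_of_mem_latitudeRange hφ).le) hsq,
    lintegral_cos_latitudeMeasure, lintegral_sin_half_sq_longitudeMeasure,
    ← ENNReal.ofReal_mul (by positivity)]
  congr 1
  ring

theorem lintegral_cracktip0_northTangent_sq :
    ∫⁻ z, ‖inner ℝ (gradient cracktip0 (geographic z)) (northTangent z)‖ₑ ^ 2
      ∂latitudeMeasure.prod longitudeMeasure = ENNReal.ofReal (π ^ 2 / 8) := by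
  have hsq (z : ℝ × ℝ) (hz₁ : z.1 ∈ latitudeRange) (hz₂ : z.2 ∈ longitudeRange) :
      inner ℝ (gradient cracktip0 (geographic z)) (northTangent z) ^ 2 =
        sin z.1 ^ 2 / 4 / cos z.1 * sin (z.2 / 2) ^ 2 := by
    rw [inner_gradient_cracktip0_northTangent hz₁ hz₂, mul_pow, div_pow, mul_pow,
      sq_sqrt (cos_pos_of_mem_latitudeRange hz₁).le]
    ring
  rw [lintegral_enorm_sq_prod_eq_mul (f := fun φ => sin φ ^ 2 / 4 / cos φ)
    (g := fun θ => sin (θ / 2) ^ 2) (by fun_prop) (by fun_prop)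
    (fun φ hφ => div_nonneg (by positivity) (cos_pos_of_mem_latitudeRange hφ).le) hsq,
    lintegral_sin_sq_div_cos_latitudeMeasure, lintegral_sin_half_sq_longitudeMeasure,
    ← ENNReal.ofReal_mul (by positivity)]
  congr 1
  ring

theorem lintegral_cracktip0_eastTangent_sq :
    ∫⁻ z, ‖inner ℝ (gradient cracktip0 (geographic z)) (eastTangent z) / cos z.1‖ₑ ^ 2
      ∂latitudeMeasure.prod longitudeMeasure = ENNReal.ofReal (π ^ 2 / 4) := by
  have hsq (z : ℝ × ℝ) (hz₁ : z.1 ∈ latitudeRange) (hz₂ : z.2 ∈ longitudeRange) :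
      (inner ℝ (gradient cracktip0 (geographic z)) (eastTangent z) / cos z.1) ^ 2 =
        1 / 4 / cos z.1 * cos (z.2 / 2) ^ 2 := by
    have hcos := cos_pos_of_mem_latitudeRange hz₁
    rw [inner_gradient_cracktip0_eastTangent hz₁ hz₂, div_pow, mul_pow, sq_sqrt hcos.le]
    field_simp
    ring
  rw [lintegral_enorm_sq_prod_eq_mul (f := fun φ => 1 / 4 / cos φ)
    (g := fun θ => cos (θ / 2) ^ 2) (by fun_prop) (by fun_prop)
    (fun φ hφ => div_nonneg (by positivity) (cos_pos_of_mem_latitudeRange hφ).le) hsq,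
    lintegral_inv_cos_latitudeMeasure, lintegral_cos_half_sq_longitudeMeasure,
    ← ENNReal.ofReal_mul (by positivity)]
  congr 1
  ring

theorem lintegral_gradient_cracktip0_sq :
    ∫⁻ x, ‖gradient cracktip0 x‖ₑ ^ 2 ∂areaMeasure =
      ENNReal.ofReal (3 / 4) * ∫⁻ x, ‖cracktip0 x‖ₑ ^ 2 ∂areaMeasure := by
  rw [lintegral_gradient_eq_add isRadiallyConstant_cracktip0 locallyLipschitzOn_cracktip0,
    lintegral_cracktip0_northTangent_sq, lintegral_cracktip0_eastTangent_sq, lintegral_cracktip0_sq,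
    ← ENNReal.ofReal_add (by positivity) (by positivity), ← ENNReal.ofReal_mul (by positivity)]
  congr 1
  ring

theorem integral_cracktip0 : ∫ x, cracktip0 x ∂areaMeasure = 0 := by
  rw [areaMeasure, integral_map (by fun_prop)
    measurable_cracktip0.aestronglyMeasurable]
  calc ∫ z, cracktip0 (geographic z) ∂latitudeMeasure.prod longitudeMeasure
    _ = ∫ z, √(cos z.1) * sin (z.2 / 2) ∂latitudeMeasure.prod longitudeMeasure :=
      integral_congr_ae (ae_mem_coordinateRange.mono fun z hz => cracktip0_geographic hz.1 hz.2)
    _ = (∫ φ, √(cos φ) ∂latitudeMeasure) * ∫ θ, sin (θ / 2) ∂longitudeMeasure :=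
      integral_prod_mul (fun φ => √(cos φ)) fun θ => sin (θ / 2)
    _ = 0 := by rw [integral_sin_half_longitudeMeasure, mul_zero]

theorem sphAdmissible_cracktip0 : SphAdmissible halfCircle cracktip0 := by
  rw [sphAdmissible_halfCircle_iff, lintegral_gradient_cracktip0_sq, lintegral_cracktip0_sq]
  exact ⟨isRadiallyConstant_cracktip0, locallyLipschitzOn_cracktip0,
    ENNReal.ofReal_pos.2 (by positivity), ENNReal.ofReal_lt_top,
    ENNReal.mul_lt_top ENNReal.ofReal_lt_top ENNReal.ofReal_lt_top, integral_cracktip0⟩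

theorem energy_cracktip0_eq :
    ∫⁻ y in S2 \ halfCircle, ENNReal.ofReal (‖gradient cracktip0 y‖ ^ 2) ∂μH[2] =
      ENNReal.ofReal (3 / 4) * ∫⁻ y in S2, ENNReal.ofReal (cracktip0 y ^ 2) ∂μH[2] := by
  obtain ⟨c, -, -, hintegrals⟩ := exists_integrals_eq_mul_areaMeasure
  rw [(hintegrals cracktip0).1, (hintegrals cracktip0).2.1, lintegral_gradient_cracktip0_sq,
    mul_left_comm]

end Cracktip

theorem lam_eq_of_isMinimizer {K : Set (Rn 3)} {g : Rn 3 → ℝ} {q : ℝ≥0∞}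
    (hg : SphAdmissible K g)
    (hattained : ∫⁻ y in S2 \ K, ENNReal.ofReal (‖gradient g y‖ ^ 2) ∂μH[2] =
      q * ∫⁻ y in S2, ENNReal.ofReal (g y ^ 2) ∂μH[2])
    (hlower : ∀ u : Rn 3 → ℝ, SphAdmissible K u →
      q * (∫⁻ y in S2, ENNReal.ofReal (u y ^ 2) ∂μH[2]) ≤
        ∫⁻ y in S2 \ K, ENNReal.ofReal (‖gradient u y‖ ^ 2) ∂μH[2]) :
    Lam K = q := by
  refine le_antisymm (sInf_le ⟨g, hg, ?_⟩) (le_sInf ?_)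
  · rw [hattained, ENNReal.mul_div_cancel_right hg.2.2.1.ne' hg.2.2.2.1.ne]
  · rintro _ ⟨u, hu, rfl⟩
    rw [ENNReal.le_div_iff_mul_le (.inl hu.2.2.1.ne') (.inl hu.2.2.2.1.ne)]
    exact hlower u hu

/-- `Λ(E₀) = 3/4`, and the infimum is attained by the restriction to
`S² ∖ E₀` of the cracktip function `f = Im √(x+iy)`: its (0-homogeneous) representative
is admissible (zero mean, `0 < ∫ f² < ∞`, finite tangential energy) and satisfies
`∫_{S² ∖ E₀} |∇_τ f|² = (3/4) ∫_{S²} f²`, while every admissible `u` satisfies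
`(3/4) ∫_{S²} u² ≤ ∫_{S² ∖ E₀} |∇_τ u|²`. -/
theorem statement7 :
    Lam halfCircle = ENNReal.ofReal (3 / 4) ∧
    SphAdmissible halfCircle cracktip0 ∧
    (∫⁻ y in S2 \ halfCircle, ENNReal.ofReal (‖gradient cracktip0 y‖ ^ 2) ∂μH[(2 : ℝ)]) =
      ENNReal.ofReal (3 / 4) *
        (∫⁻ y in S2, ENNReal.ofReal ((cracktip0 y) ^ 2) ∂μH[(2 : ℝ)]) ∧
    ∀ g : Rn 3 → ℝ, SphAdmissible halfCircle g →
      ENNReal.ofReal (3 / 4) * (∫⁻ y in S2, ENNReal.ofReal ((g y) ^ 2) ∂μH[(2 : ℝ)]) ≤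
        ∫⁻ y in S2 \ halfCircle, ENNReal.ofReal (‖gradient g y‖ ^ 2) ∂μH[(2 : ℝ)] := by
  have hlower (g : Rn 3 → ℝ) (hg : SphAdmissible halfCircle g) :=
    three_quarters_mul_lintegral_le_of_sphAdmissible hg
  exact ⟨lam_eq_of_isMinimizer sphAdmissible_cracktip0 energy_cracktip0_eq hlower,
    sphAdmissible_cracktip0, energy_cracktip0_eq, hlower⟩
end
end

section
/- Let (u,K) be a global Mumford–Shah minimizer in ℝ^N. Then for every r > 0, ∫_{B_r ∖ K} |∇u|² dx ≤ ω_N r^{N−1}, where ω_N = H^{N-1}(S^{N-1}) is the area of the unit sphere. -/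
open MeasureTheory Metric Set Filter
open scoped ENNReal NNReal Topology

noncomputable section

/-- An admissible pair `(u, K)`: `K ⊆ ℝ^N` closed, `u` locally Lipschitz on `ℝ^N ∖ K`
with `∫_{B_R ∖ K} (u² + |∇u|²) < ∞` for every `R > 0`. -/
structure MSPair (N : ℕ) where
  K : Set (Rn N)
  u : Rn N → ℝ
  closed : IsClosed K
  lip : LocLipOn N u Kᶜ
  integ : ∀ R : ℝ, 0 < R →
    IntegrableOn (fun x => (u x) ^ 2 + ‖gradient u x‖ ^ 2) (ball 0 R \ K) volume

/-- The Mumford–Shah energy `∫_{B ∖ K} |∇u|² + H^{N-1}(K ∩ B)` of a pair in a set `B`. -/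
def MSEnergy (N : ℕ) (P : MSPair N) (B : Set (Rn N)) : ℝ≥0∞ :=
  (∫⁻ x in B \ P.K, ENNReal.ofReal (‖gradient P.u x‖ ^ 2)) + μH[(N : ℝ) - 1] (P.K ∩ B)

/-- `Q = (v, L)` is a competitor for `P = (u, K)` in the open ball `B`:
`L ∖ B = K ∖ B`, `v = u` outside `B ∪ K ∪ L`, and the topological separation condition. -/
def Competitor (N : ℕ) (P Q : MSPair N) (B : Set (Rn N)) : Prop :=
  Q.K \ B = P.K \ B ∧
  (∀ x, x ∉ B ∪ P.K ∪ Q.K → Q.u x = P.u x) ∧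
  ∀ x, x ∉ B ∪ P.K → ∀ y, y ∉ B ∪ P.K →
    connectedComponentIn P.Kᶜ x ≠ connectedComponentIn P.Kᶜ y →
    connectedComponentIn Q.Kᶜ x ≠ connectedComponentIn Q.Kᶜ y

/-- Global Mumford–Shah minimizer in `ℝ^N`. -/
def IsGlobalMin (N : ℕ) (P : MSPair N) : Prop :=
  ∀ (c : Rn N) (R : ℝ), 0 < R → ∀ Q : MSPair N,
    Competitor N P Q (ball c R) → MSEnergy N P (ball c R) ≤ MSEnergy N Q (ball c R)

/-- Reduced global minimizer: no competitor with smaller singular set and the same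
function off `K` exists. -/
def MSIsReduced (N : ℕ) (P : MSPair N) : Prop :=
  ∀ (c : Rn N) (R : ℝ), 0 < R → ∀ Q : MSPair N,
    Competitor N P Q (ball c R) → Q.K ⊆ P.K →
    (∀ x, x ∉ P.K → Q.u x = P.u x) → Q.K = P.K

/-!
To bound the energy of `u` in `B_r` one compares `(u, K)` with the pair obtained by erasing `K` and
setting `u = 0` inside a wall close to `∂B_r`. The sphere `∂B_r` itself is not admissible as a wall,
since a competitor may only change `K` inside the open ball, and a smaller concentric sphere would
leave in `B_r` a piece of `K` which is not known to have finite measure. The wall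
`{‖x‖ + c * dist(x, K ∪ {0}) = r}` with small `c > 0` avoids both problems: it lies in the closed
ball, touches `∂B_r` exactly along `K`, and leaves no point of `K` between itself and `∂B_r`. The
radial projection onto the unit sphere has an `r / (1 - c)`-Lipschitz inverse on it, so its area is
at most `(r / (1 - c)) ^ (N - 1) * ω_N`, and the energy left between it and `∂B_r` vanishes as
`c → 0`.
-/

section RadialProjection

open NormedSpace (normalize norm_normalize norm_smul_normalize)

theorem hausdorffMeasure_le_mul_image_of_dist_le {X Y : Type*} [MetricSpace X] [MeasurableSpace X]
    [BorelSpace X] [MetricSpace Y] [MeasurableSpace Y] [BorelSpace Y] {f : X → Y} {s : Set X}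
    {C : ℝ≥0} {d : ℝ} (hd : 0 ≤ d) (hf : ∀ x ∈ s, ∀ y ∈ s, dist x y ≤ C * dist (f x) (f y)) :
    μH[d] s ≤ (C : ℝ≥0∞) ^ d * μH[d] (f '' s) := by
  have hanti : AntilipschitzWith C (s.domRestrict f) :=
    AntilipschitzWith.of_le_mul_dist fun x y => hf x x.2 y y.2
  calc μH[d] s = μH[d] (univ : Set s) := by
        rw [← (isometry_subtype_coe (s := s)).hausdorffMeasure_image (Or.inl hd), image_univ,
          Subtype.range_coe]
    _ ≤ (C : ℝ≥0∞) ^ d * μH[d] (s.domRestrict f '' univ) := hanti.le_hausdorffMeasure_image hd univ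
    _ = (C : ℝ≥0∞) ^ d * μH[d] (f '' s) := by rw [image_univ, range_domRestrict]

variable {E : Type*} [NormedAddCommGroup E] [NormedSpace ℝ E]

theorem norm_normalize_le_one (x : E) : ‖normalize x‖ ≤ 1 := by
  rcases eq_or_ne x 0 with rfl | hx
  · simp
  · exact (norm_normalize hx).le

theorem dist_le_norm_mul_dist_normalize_add_abs (x y : E) :
    dist x y ≤ ‖x‖ * dist (normalize x) (normalize y) + |‖x‖ - ‖y‖| := by
  have hsplit : x - y = ‖x‖ • (normalize x - normalize y) + (‖x‖ - ‖y‖) • normalize y := by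
    rw [smul_sub, sub_smul, norm_smul_normalize, norm_smul_normalize]
    abel
  calc dist x y = ‖‖x‖ • (normalize x - normalize y) + (‖x‖ - ‖y‖) • normalize y‖ := by
        rw [← hsplit, dist_eq_norm]
    _ ≤ ‖x‖ * dist (normalize x) (normalize y) + |‖x‖ - ‖y‖| * ‖normalize y‖ := by
        refine (norm_add_le _ _).trans_eq ?_
        rw [norm_smul, norm_smul, norm_norm, Real.norm_eq_abs, dist_eq_norm]
    _ ≤ ‖x‖ * dist (normalize x) (normalize y) + |‖x‖ - ‖y‖| := by
        gcongr
        exact mul_le_of_le_one_right (abs_nonneg _) (norm_normalize_le_one y)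

theorem hausdorffMeasure_le_mul_sphere_of_abs_norm_sub_le [MeasurableSpace E] [BorelSpace E]
    {s : Set E} {c r d : ℝ} (hd : 0 ≤ d) (hc : c < 1) (h0 : (0 : E) ∉ s) (hr : ∀ x ∈ s, ‖x‖ ≤ r)
    (hs : ∀ x ∈ s, ∀ y ∈ s, |‖x‖ - ‖y‖| ≤ c * dist x y) :
    μH[d] s ≤ ENNReal.ofReal (r / (1 - c)) ^ d * μH[d] (sphere (0 : E) 1) := by
  have hanti : ∀ x ∈ s, ∀ y ∈ s,
      dist x y ≤ Real.toNNReal (r / (1 - c)) * dist (normalize x) (normalize y) := by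
    intro x hx y hy
    have hdist : dist x y ≤ r / (1 - c) * dist (normalize x) (normalize y) := by
      rw [div_mul_eq_mul_div, le_div_iff₀ (sub_pos.2 hc)]
      have hnorm : ‖x‖ * dist (normalize x) (normalize y) ≤ r * dist (normalize x) (normalize y) :=
        mul_le_mul_of_nonneg_right (hr x hx) dist_nonneg
      linarith [dist_le_norm_mul_dist_normalize_add_abs x y, hs x hx y hy]
    exact hdist.trans (mul_le_mul_of_nonneg_right (Real.le_coe_toNNReal _) dist_nonneg)
  refine (hausdorffMeasure_le_mul_image_of_dist_le hd hanti).trans ?_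
  have himage : (normalize : E → E) '' s ⊆ sphere (0 : E) 1 := by
    rintro _ ⟨x, hx, rfl⟩
    exact mem_sphere_zero_iff_norm.2 (norm_normalize (ne_of_mem_of_not_mem hx h0))
  exact mul_le_mul_right (measure_mono himage) _

end RadialProjection

section BentNorm

variable {E : Type*} [NormedAddCommGroup E] {K : Set E} {c r : ℝ} {x : E}

/-- The norm raised by `c` times the distance to `K`, whose level sets are spheres bent inwards
off `K`. Adding the origin to `K` keeps the distance meaningful for empty `K` and makes the bent
norm vanish at `0`. -/
def bentNorm (K : Set E) (c : ℝ) (x : E) : ℝ :=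
  ‖x‖ + c * infDist x (insert 0 K)

theorem continuous_bentNorm (K : Set E) (c : ℝ) : Continuous (bentNorm K c) :=
  continuous_norm.add (continuous_const.mul (continuous_infDist_pt _))

theorem bentNorm_zero : bentNorm K c 0 = 0 := by
  rw [bentNorm, infDist_zero_of_mem (mem_insert _ _), norm_zero, mul_zero, add_zero]

theorem bentNorm_of_mem (hx : x ∈ K) : bentNorm K c x = ‖x‖ := by
  rw [bentNorm, infDist_zero_of_mem (mem_insert_of_mem _ hx), mul_zero, add_zero]

theorem norm_le_bentNorm (hc : 0 ≤ c) : ‖x‖ ≤ bentNorm K c x :=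
  le_add_of_nonneg_right (mul_nonneg hc infDist_nonneg)

theorem norm_lt_bentNorm (hK : IsClosed K) (hc : 0 < c) (hxK : x ∉ K) (hx0 : x ≠ 0) :
    ‖x‖ < bentNorm K c x := by
  have hclosed : IsClosed (insert 0 K) := by
    rw [insert_eq]
    exact isClosed_singleton.union hK
  have hx : x ∉ insert 0 K := by
    rw [mem_insert_iff, not_or]
    exact ⟨hx0, hxK⟩
  exact lt_add_of_pos_right _
    (mul_pos hc ((hclosed.notMem_iff_infDist_pos (insert_nonempty 0 K)).1 hx))

theorem bentNorm_mono_right {c' : ℝ} (h : c ≤ c') : bentNorm K c x ≤ bentNorm K c' x :=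
  add_le_add_right (mul_le_mul_of_nonneg_right h infDist_nonneg) _

theorem abs_norm_sub_le_of_bentNorm_eq {y : E} (hc : 0 ≤ c)
    (h : bentNorm K c x = bentNorm K c y) : |‖x‖ - ‖y‖| ≤ c * dist x y := by
  have hinfDist : |infDist y (insert 0 K) - infDist x (insert 0 K)| ≤ dist x y := by
    simpa [abs_sub_comm, Real.dist_eq] using (lipschitz_infDist_pt (insert 0 K)).dist_le_mul x y
  calc |‖x‖ - ‖y‖| = |c * (infDist y (insert 0 K) - infDist x (insert 0 K))| := by
        congr 1
        unfold bentNorm at h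
        linarith
    _ = c * |infDist y (insert 0 K) - infDist x (insert 0 K)| := by rw [abs_mul, abs_of_nonneg hc]
    _ ≤ c * dist x y := mul_le_mul_of_nonneg_left hinfDist hc

theorem hausdorffMeasure_bentNorm_eq_le [NormedSpace ℝ E] [MeasurableSpace E] [BorelSpace E]
    {d : ℝ} (hd : 0 ≤ d) (hr : r ≠ 0) (hc : 0 ≤ c) (hc1 : c < 1) :
    μH[d] {x | bentNorm K c x = r} ≤
      ENNReal.ofReal (r / (1 - c)) ^ d * μH[d] (sphere (0 : E) 1) := by
  refine hausdorffMeasure_le_mul_sphere_of_abs_norm_sub_le hd hc1 ?_ ?_ ?_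
  · exact fun h => hr (h.symm.trans bentNorm_zero)
  · exact fun x hx => (norm_le_bentNorm hc).trans_eq hx
  · exact fun x hx y hy => abs_norm_sub_le_of_bentNorm_eq hc (hx.trans hy.symm)

theorem tendsto_measure_ball_inter_lt_bentNorm [MeasurableSpace E] [OpensMeasurableSpace E]
    {μ : Measure E} (K : Set E) (hμ : μ (ball 0 r) ≠ ∞) :
    Tendsto (fun c => μ (ball 0 r ∩ {x | r < bentNorm K c x})) (𝓝[>] 0) (𝓝 0) := by
  have hempty : ⋂ c > (0 : ℝ), ball 0 r ∩ {x | r < bentNorm K c x} = ∅ := by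
    refine eq_empty_of_forall_notMem fun x hx => ?_
    simp only [mem_iInter, mem_inter_iff, mem_ball_zero_iff, mem_ofPred_eq] at hx
    have hlim : Tendsto (fun c => bentNorm K c x) (𝓝[>] 0) (𝓝 ‖x‖) := by
      have hcont : Continuous fun c => bentNorm K c x := by
        unfold bentNorm
        fun_prop
      simpa [bentNorm] using (hcont.tendsto 0).mono_left nhdsWithin_le_nhds
    have hle : r ≤ ‖x‖ := ge_of_tendsto hlim <| by
      filter_upwards [self_mem_nhdsWithin] with c hc using (hx c hc).2.le
    exact absurd (hx 1 one_pos).1 hle.not_gt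
  have hlim := tendsto_measure_biInter_gt (μ := μ) (a := (0 : ℝ))
    (s := fun c => ball 0 r ∩ {x | r < bentNorm K c x})
    (fun c _ => (measurableSet_ball.inter
      (measurableSet_lt measurable_const (continuous_bentNorm K c).measurable)).nullMeasurableSet)
    (fun _ _ _ hij _ hx => ⟨hx.1, lt_of_lt_of_le hx.2 (bentNorm_mono_right hij)⟩)
    ⟨1, one_pos, ne_top_of_le_ne_top hμ (measure_mono inter_subset_left)⟩
  rwa [hempty, measure_empty] at hlim

end BentNorm

section CutSet

variable {X : Type*} {K : Set X} {φ : X → ℝ} {r : ℝ} {x : X}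

/-- The set left of `K` after erasing it inside the wall `{φ = r}` and adding the wall. -/
def cutSet (K : Set X) (φ : X → ℝ) (r : ℝ) : Set X :=
  K ∩ {x | r ≤ φ x} ∪ {x | φ x = r}

theorem mem_cutSet_iff_of_lt (hx : r < φ x) : x ∈ cutSet K φ r ↔ x ∈ K := by
  simp [cutSet, hx.le, hx.ne']

theorem ne_of_notMem_cutSet (hx : x ∉ cutSet K φ r) : φ x ≠ r :=
  fun h => hx (Or.inr h)

theorem isClosed_cutSet [TopologicalSpace X] (hK : IsClosed K) (hφ : Continuous φ) (r : ℝ) :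
    IsClosed (cutSet K φ r) :=
  (hK.inter (isClosed_le continuous_const hφ)).union (isClosed_eq hφ continuous_const)

theorem connectedComponentIn_compl_cutSet_subset [TopologicalSpace X] (hφ : Continuous φ)
    (hxK : x ∉ K) (hx : r < φ x) :
    connectedComponentIn (cutSet K φ r)ᶜ x ⊆ connectedComponentIn Kᶜ x := by
  set C := connectedComponentIn (cutSet K φ r)ᶜ x
  have hC : IsPreconnected C := isPreconnected_connectedComponentIn
  have hxC : x ∈ C := mem_connectedComponentIn fun h => hxK ((mem_cutSet_iff_of_lt hx).1 h)
  have hCcut : C ⊆ (cutSet K φ r)ᶜ := connectedComponentIn_subset _ _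
  have hCφ : ∀ y ∈ C, r < φ y := fun _ hy =>
    hC.lt_of_ne hφ.continuousOn (fun _ hz => ne_of_notMem_cutSet (hCcut hz)) ⟨x, hxC, hx⟩ hy
  exact hC.subset_connectedComponentIn hxC fun y hy hyK =>
    hCcut hy ((mem_cutSet_iff_of_lt (hCφ y hy)).2 hyK)

end CutSet

section CutOffFunction

variable {E : Type*} {φ : E → ℝ} {r : ℝ} {x : E}

theorem indicator_lt_eventuallyEq [TopologicalSpace E] {M : Type*} [Zero M] (hφ : Continuous φ)
    (u : E → M) (hx : r < φ x) : {x | r < φ x}.indicator u =ᶠ[𝓝 x] u := by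
  filter_upwards [hφ.continuousAt.eventually (lt_mem_nhds hx)] with y hy
  exact indicator_of_mem (s := {x | r < φ x}) hy u

theorem indicator_lt_eventuallyEq_zero [TopologicalSpace E] {M : Type*} [Zero M]
    (hφ : Continuous φ) (u : E → M) (hx : φ x < r) :
    {x | r < φ x}.indicator u =ᶠ[𝓝 x] fun _ => 0 := by
  filter_upwards [hφ.continuousAt.eventually (gt_mem_nhds hx)] with y hy
  exact indicator_of_notMem (s := {x | r < φ x}) hy.not_gt u

theorem indicator_compl_cutSet_gradient [NormedAddCommGroup E] [InnerProductSpace ℝ E]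
    [CompleteSpace E] {M : Type*} [Zero M] (hφ : Continuous φ) (K : Set E) (u : E → ℝ)
    {F : ℝ → E → M} (hF : F 0 0 = 0) :
    (cutSet K φ r)ᶜ.indicator
        (fun x => F ({x | r < φ x}.indicator u x) (gradient ({x | r < φ x}.indicator u) x)) =
      {x | r < φ x}.indicator (Kᶜ.indicator fun x => F (u x) (gradient u x)) := by
  funext x
  rcases lt_trichotomy (φ x) r with hx | hx | hx
  · have hu := indicator_lt_eventuallyEq_zero hφ u hx
    have hzero : F ({x | r < φ x}.indicator u x) (gradient ({x | r < φ x}.indicator u) x) = 0 := by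
      rw [hu.eq_of_nhds, hu.gradient_eq, gradient_fun_const, hF]
    rw [indicator_of_notMem (s := {x | r < φ x}) hx.not_gt, indicator_apply_eq_zero]
    exact fun _ => hzero
  · rw [indicator_of_notMem (s := {x | r < φ x}) hx.le.not_gt,
      indicator_of_notMem (not_not.2 (Or.inr hx))]
  · have hu := indicator_lt_eventuallyEq hφ u hx
    rw [indicator_of_mem (s := {x | r < φ x}) hx]
    by_cases hxK : x ∈ K
    · rw [indicator_of_notMem (s := Kᶜ) (not_not.2 hxK),
        indicator_of_notMem (s := (cutSet K φ r)ᶜ) (not_not.2 ((mem_cutSet_iff_of_lt hx).2 hxK))]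
    · rw [indicator_of_mem (s := Kᶜ) hxK,
        indicator_of_mem (s := (cutSet K φ r)ᶜ) (fun h => hxK ((mem_cutSet_iff_of_lt hx).1 h)),
        hu.eq_of_nhds, hu.gradient_eq]

theorem locLipOn_indicator_compl_cutSet {N : ℕ} {u φ : Rn N → ℝ} {K : Set (Rn N)}
    (hK : IsClosed K) (hu : LocLipOn N u Kᶜ) (hφ : Continuous φ) :
    LocLipOn N ({x | r < φ x}.indicator u) (cutSet K φ r)ᶜ := by
  intro x hx
  rcases (ne_of_notMem_cutSet hx).lt_or_gt with hlt | hgt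
  · refine ⟨_, mem_nhdsWithin_of_mem_nhds (indicator_lt_eventuallyEq_zero hφ u hlt), 0, ?_⟩
    intro y (hy : _ = (0 : ℝ)) z (hz : _ = (0 : ℝ))
    rw [hy, hz, edist_self]
    exact zero_le
  · have hxK : x ∈ Kᶜ := fun h => hx ((mem_cutSet_iff_of_lt hgt).2 h)
    obtain ⟨t, ht, C, hC⟩ := hu x hxK
    rw [hK.isOpen_compl.nhdsWithin_eq hxK] at ht
    refine ⟨t ∩ {y | {x | r < φ x}.indicator u y = u y},
      mem_nhdsWithin_of_mem_nhds (inter_mem ht (indicator_lt_eventuallyEq hφ u hgt)), C, ?_⟩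
    rintro y ⟨hyt, hy : _ = _⟩ z ⟨hzt, hz : _ = _⟩
    rw [hy, hz]
    exact hC hyt hzt

end CutOffFunction

namespace MSPair

variable {N : ℕ} (P : MSPair N) {φ : Rn N → ℝ} (hφ : Continuous φ) (r : ℝ)

/-- The pair obtained from `(u, K)` by erasing `K` and setting `u = 0` where `φ < r`, at the cost
of adding the wall `{φ = r}` to the singular set. -/
def cutOff : MSPair N where
  K := cutSet P.K φ r
  u := {x | r < φ x}.indicator P.u
  closed := isClosed_cutSet P.closed hφ r
  lip := locLipOn_indicator_compl_cutSet P.closed P.lip hφ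
  integ R hR := by
    have hmeas : MeasurableSet {x | r < φ x} := measurableSet_lt measurable_const hφ.measurable
    have hP := P.integ R hR
    rw [sdiff_eq, inter_comm, ← integrableOn_indicator_iff P.closed.measurableSet.compl] at hP
    rw [sdiff_eq, inter_comm,
      ← integrableOn_indicator_iff (isClosed_cutSet P.closed hφ r).measurableSet.compl,
      indicator_compl_cutSet_gradient hφ P.K P.u (F := fun a g => a ^ 2 + ‖g‖ ^ 2) (by simp)]
    exact hP.indicator hmeas

variable {r}

theorem competitor_cutOff {B : Set (Rn N)} (hB : ∀ x ∉ B, r ≤ φ x)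
    (hBK : ∀ x ∉ B ∪ P.K, r < φ x) : Competitor N P (P.cutOff hφ r) B := by
  refine ⟨?_, ?_, ?_⟩
  · ext x
    refine and_congr_left fun hxB => ⟨?_, fun hxK => Or.inl ⟨hxK, hB x hxB⟩⟩
    rintro (hx | hx)
    · exact hx.1
    · by_contra hxK
      exact (hBK x (not_or.2 ⟨hxB, hxK⟩)).ne' hx
  · exact fun x hx => indicator_of_mem (s := {x | r < φ x}) (hBK x fun h => hx (Or.inl h)) P.u
  · intro x hx y hy hne heq
    have hyK : y ∉ P.K := fun h => hy (Or.inr h)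
    have hycut : y ∈ (cutSet P.K φ r)ᶜ := fun h => hyK ((mem_cutSet_iff_of_lt (hBK y hy)).1 h)
    have hyx : y ∈ connectedComponentIn (cutSet P.K φ r)ᶜ x :=
      heq.symm.subset (mem_connectedComponentIn hycut)
    exact hne (connectedComponentIn_eq
      (connectedComponentIn_compl_cutSet_subset hφ (fun h => hx (Or.inr h)) (hBK x hx) hyx))

/-- The measure with density `|∇u|²` off `K`, i.e. the bulk part of the Mumford–Shah energy. -/
def dirichletMeasure : Measure (Rn N) :=
  volume.withDensity (P.Kᶜ.indicator fun x => ENNReal.ofReal (‖gradient P.u x‖ ^ 2))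

theorem dirichletMeasure_apply (B : Set (Rn N)) :
    P.dirichletMeasure B = ∫⁻ x in B \ P.K, ENNReal.ofReal (‖gradient P.u x‖ ^ 2) := by
  rw [dirichletMeasure, withDensity_apply', lintegral_indicator P.closed.measurableSet.compl,
    Measure.restrict_restrict P.closed.measurableSet.compl, inter_comm, sdiff_eq]

theorem msEnergy_eq_dirichletMeasure_add (B : Set (Rn N)) :
    MSEnergy N P B = P.dirichletMeasure B + μH[(N : ℝ) - 1] (P.K ∩ B) := by
  rw [MSEnergy, dirichletMeasure_apply]

theorem dirichletMeasure_ball_ne_top {R : ℝ} (hR : 0 < R) : P.dirichletMeasure (ball 0 R) ≠ ∞ := by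
  rw [dirichletMeasure_apply]
  refine (lt_of_le_of_lt (lintegral_mono fun x => ?_) (P.integ R hR).lintegral_lt_top).ne
  exact ENNReal.ofReal_le_ofReal (le_add_of_nonneg_left (sq_nonneg _))

theorem dirichletMeasure_cutOff :
    (P.cutOff hφ r).dirichletMeasure = P.dirichletMeasure.restrict {x | r < φ x} := by
  have hmeas : MeasurableSet {x | r < φ x} := measurableSet_lt measurable_const hφ.measurable
  rw [dirichletMeasure, dirichletMeasure, restrict_withDensity hmeas, ← withDensity_indicator hmeas]
  congr 1
  exact indicator_compl_cutSet_gradient hφ P.K P.u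
    (F := fun _ g => ENNReal.ofReal (‖g‖ ^ 2)) (by simp)

theorem msEnergy_cutOff_le (B : Set (Rn N)) :
    MSEnergy N (P.cutOff hφ r) B ≤
      MSEnergy N P (B ∩ {x | r < φ x}) + μH[(N : ℝ) - 1] {x | φ x = r} := by
  have hmeas : MeasurableSet {x | r < φ x} := measurableSet_lt measurable_const hφ.measurable
  have hcut : cutSet P.K φ r ∩ B ⊆ P.K ∩ (B ∩ {x | r < φ x}) ∪ {x | φ x = r} := by
    rintro x ⟨⟨hxK, hx⟩ | hx, hxB⟩
    · exact (eq_or_lt_of_le hx).elim (fun h => Or.inr h.symm) (fun h => Or.inl ⟨hxK, hxB, h⟩)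
    · exact Or.inr hx
  rw [msEnergy_eq_dirichletMeasure_add, msEnergy_eq_dirichletMeasure_add, dirichletMeasure_cutOff,
    Measure.restrict_apply' hmeas, add_assoc]
  gcongr
  exact (measure_mono hcut).trans (measure_union_le _ _)

variable {P} {c : ℝ}

theorem dirichletMeasure_ball_le_add_hausdorffMeasure (hmin : IsGlobalMin N P) (hr : 0 < r)
    (hc : 0 < c) :
    P.dirichletMeasure (ball 0 r) ≤ P.dirichletMeasure (ball 0 r ∩ {x | r < bentNorm P.K c x}) +
      μH[(N : ℝ) - 1] {x | bentNorm P.K c x = r} := by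
  have hcomp : Competitor N P (P.cutOff (continuous_bentNorm P.K c) r) (ball 0 r) := by
    have hout : ∀ x ∉ ball (0 : Rn N) r, r ≤ ‖x‖ := fun x hx =>
      not_lt.1 (mt mem_ball_zero_iff.2 hx)
    refine P.competitor_cutOff _ (fun x hx => (hout x hx).trans (norm_le_bentNorm hc.le)) ?_
    intro x hx
    obtain ⟨hxB, hxK⟩ := not_or.1 hx
    exact (hout x hxB).trans_lt
      (norm_lt_bentNorm P.closed hc hxK (norm_pos_iff.1 (hr.trans_le (hout x hxB))))
  have hempty : P.K ∩ (ball 0 r ∩ {x | r < bentNorm P.K c x}) = ∅ := by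
    refine eq_empty_of_forall_notMem ?_
    rintro x ⟨hxK, hxB, hx⟩
    exact lt_asymm (mem_ball_zero_iff.1 hxB) (hx.trans_eq (bentNorm_of_mem hxK))
  calc P.dirichletMeasure (ball 0 r) ≤ MSEnergy N P (ball 0 r) := by
        rw [msEnergy_eq_dirichletMeasure_add]
        exact le_self_add
    _ ≤ MSEnergy N (P.cutOff (continuous_bentNorm P.K c) r) (ball 0 r) := hmin 0 r hr _ hcomp
    _ ≤ _ := P.msEnergy_cutOff_le _ _
    _ = _ := by rw [msEnergy_eq_dirichletMeasure_add, hempty, measure_empty, add_zero]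

theorem dirichletMeasure_ball_le (hN : 1 ≤ N) (hmin : IsGlobalMin N P) (hr : 0 < r) :
    P.dirichletMeasure (ball 0 r) ≤
      ENNReal.ofReal r ^ ((N : ℝ) - 1) * μH[(N : ℝ) - 1] (sphere (0 : Rn N) 1) := by
  have hd : (0 : ℝ) ≤ N - 1 := sub_nonneg.2 (Nat.one_le_cast.2 hN)
  have hradius : Tendsto (fun c : ℝ => r / (1 - c)) (𝓝[>] 0) (𝓝 r) := by
    have hcont : ContinuousAt (fun c : ℝ => r / (1 - c)) 0 :=
      continuousAt_const.div (by fun_prop) (by norm_num)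
    simpa using hcont.tendsto.mono_left nhdsWithin_le_nhds
  have harea : Tendsto (fun c : ℝ => ENNReal.ofReal (r / (1 - c)) ^ ((N : ℝ) - 1) *
        μH[(N : ℝ) - 1] (sphere (0 : Rn N) 1)) (𝓝[>] 0)
      (𝓝 (ENNReal.ofReal r ^ ((N : ℝ) - 1) * μH[(N : ℝ) - 1] (sphere (0 : Rn N) 1))) :=
    ENNReal.Tendsto.mul_const ((ENNReal.tendsto_ofReal hradius).ennrpow_const _)
      (Or.inl (ENNReal.rpow_pos (ENNReal.ofReal_pos.2 hr) ENNReal.ofReal_ne_top).ne')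
  have hlim := (tendsto_measure_ball_inter_lt_bentNorm P.K
    (P.dirichletMeasure_ball_ne_top hr)).add harea
  rw [zero_add] at hlim
  refine ge_of_tendsto hlim ?_
  filter_upwards [Ioo_mem_nhdsGT one_pos] with c hc
  exact (dirichletMeasure_ball_le_add_hausdorffMeasure hmin hr hc.1).trans
    (add_le_add_right (hausdorffMeasure_bentNorm_eq_le hd hr.ne' hc.1.le hc.2) _)

end MSPair

/-- elementary energy estimate. For every global Mumford–Shah
minimizer `(u, K)` in `ℝ^N` and every `r > 0`,
`∫_{B_r ∖ K} |∇u|² dx ≤ ω_N r^{N-1}`, where `ω_N = H^{N-1}(S^{N-1})`. -/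
theorem statement14 {N : ℕ} (P : MSPair N) (hmin : IsGlobalMin N P) :
    ∀ r : ℝ, 0 < r →
      (∫⁻ x in ball (0 : Rn N) r \ P.K, ENNReal.ofReal (‖gradient P.u x‖ ^ 2)) ≤
        μH[(N : ℝ) - 1] (sphere (0 : Rn N) 1) * ENNReal.ofReal (r ^ (N - 1)) := by
  intro r hr
  rcases Nat.eq_zero_or_pos N with rfl | hN
  · simp [Subsingleton.elim (gradient P.u _) 0]
  · have hbound := MSPair.dirichletMeasure_ball_le hN hmin hr
    rwa [P.dirichletMeasure_apply, ← Nat.cast_pred hN, ENNReal.rpow_natCast,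
      ← ENNReal.ofReal_pow hr.le, Nat.cast_pred hN, mul_comm] at hbound
end
end
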